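/- For all real x, y with |x| + |y| < 1 and x + y ≠ 0, the double series Σ_{n≥0} Σ_{k≥0} (n+k)(n+k+1)·q_{n,k}·x^n·y^k converges absolutely, equals Σ_{ℓ≥0} ℓ(ℓ+1)·(x+y)^ℓ·E[(x/(x+y))^{N_ℓ}], and equals (2x/(1−x−y)²)·Σ_{n≥0} Σ_{k≥0} q_{n,k}·x^n·y^k. -/

import Mathlib

open MeasureTheory

noncomputable section

/-- The triangle with vertices (0,0), (1,0), (0,1). -/
def T : Set (ℝ × ℝ) := convexHull ℝ {(0, 0), (1, 0), (0, 1)}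

/-- The uniform distribution on `T`: twice Lebesgue measure restricted to `T`. -/
def μT : Measure (ℝ × ℝ) := (2 : ENNReal) • (volume.restrict T)

/-- Joint law of `n` independent uniform points in `T`. -/
def P (n : ℕ) : Measure (Fin n → ℝ × ℝ) := Measure.pi fun _ => μT

/-- The random convex chain: convex hull of the points together with `(1,0)` and `(0,1)`. -/
def Tchain (n : ℕ) (ω : Fin n → ℝ × ℝ) : Set (ℝ × ℝ) :=
  convexHull ℝ (Set.range ω ∪ {(1, 0), (0, 1)})

/-- Normalized area `V_n = 2 vol(T_n)`. -/
def V (n : ℕ) (ω : Fin n → ℝ × ℝ) : ℝ := 2 * (volume (Tchain n ω)).toReal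

/-- Number of vertices of `T_n` other than the two corners. -/
def N (n : ℕ) (ω : Fin n → ℝ × ℝ) : ℕ :=
  (Set.extremePoints ℝ (Tchain n ω)).ncard - 2

/-- Normalized moments `q_{n,k} = C(n+k,k) E[V_n^k]`. -/
def q (n k : ℕ) : ℝ := ((n + k).choose k : ℝ) * ∫ ω, (V n ω) ^ k ∂ P n

/-- Probability generating function of `N_n`. -/
def G (n : ℕ) (t : ℝ) : ℝ := ∫ ω, t ^ (N n ω) ∂ P n

/-- Harmonic number. -/
def H (j : ℕ) : ℝ := ∑ i ∈ Finset.range j, 1 / ((i : ℝ) + 1)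

/-- Generalized harmonic number of order 2. -/
def H2 (j : ℕ) : ℝ := ∑ i ∈ Finset.range j, 1 / ((i : ℝ) + 1) ^ 2

/-- `c(k,ℓ)`: elementary symmetric polynomial `e_k` of `2/(j(j+1))`, `j = 1,…,ℓ`. -/
def c (k l : ℕ) : ℝ :=
  ∑ S ∈ (Finset.Icc 1 l).powersetCard k, ∏ j ∈ S, 2 / ((j : ℝ) * ((j : ℝ) + 1))

/-!
Efron's argument: all points of a sample of size `l` lie in the hull spanned by the two corners and
a given subset of the sample exactly when the subset contains the `N_l` vertices. Summing over
subsets gives `Σ_{n+k=l} q_{n,k} x^n y^k = d_l` with `d_l = E[x^{N_l} (x+y)^{l-N_l}]`.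

Among `m + 1` points let `p` be the one seen from `(1, 0)` at the smallest slope `s`. It is a
vertex, and the remaining points are uniform on the union of the triangles `(0,s), p, (0,1)` and
`p, (1,0), (0,1)`. Points of the second triangle are never vertices, while those of the first one
form an affine copy of the chain. Integrating the areas of the two triangles, exactly `i` of the
points fall into the first one with probability `2(j+1)/((m+1)(m+2))`, where `i + j = m`, and then
`N_{m+1}` has the law of `N_i + 1`. Hence `(m+1)(m+2) d_{m+1} = 2x Σ_{i+j=m} d_i (j+1) (x+y)^j`, a
Cauchy product with the power series of `(1-x-y)⁻²`.
-/

section Convexity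

variable {ι κ E : Type*} [AddCommGroup E] [Module ℝ E] {x e : E} {A B C : Set E}

theorem mem_extremePoints_convexHull_iff_notMem (hx : x ∈ A) :
    x ∈ (convexHull ℝ A).extremePoints ℝ ↔ x ∉ convexHull ℝ (A \ {x}) := by
  refine ⟨fun h hmem => ?_, fun h => mem_extremePoints_iff_left.2
    ⟨subset_convexHull ℝ A hx, fun a ha b hb hab => ?_⟩⟩
  · rw [(convex_convexHull ℝ A).mem_extremePoints_iff_mem_sdiff_convexHull_sdiff] at h
    exact h.2 (convexHull_mono (Set.sdiff_subset_sdiff_left (subset_convexHull ℝ A)) hmem)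
  rcases (A \ {x}).eq_empty_or_nonempty with hempty | hne
  · rw [Set.eq_singleton_iff_unique_mem.2 ⟨hx, fun y hy => Set.sdiff_eq_empty.1 hempty hy⟩,
      convexHull_singleton] at ha
    exact ha
  have weights (z : E) (hz : z ∈ convexHull ℝ A) :
      ∃ α : ℝ, 0 ≤ α ∧ ∃ c ∈ convexHull ℝ (A \ {x}), z = (1 - α) • x + α • c := by
    rw [← Set.insert_sdiff_self_of_mem hx, convexHull_insert hne, mem_convexJoin] at hz
    obtain ⟨_, rfl, c, hc, τ, σ, -, hσ, hsum, rfl⟩ := hz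
    exact ⟨σ, hσ, c, hc, by rw [← hsum, add_sub_cancel_right]⟩
  obtain ⟨α, hα, c, hc, rfl⟩ := weights a ha
  obtain ⟨β, hβ, d, hd, rfl⟩ := weights b hb
  obtain ⟨u, v, hu, hv, huv, hsum⟩ := hab
  rcases hα.eq_or_lt with rfl | hα
  · simp
  refine absurd ?_ h
  obtain ⟨z, hz, hzeq⟩ := (convex_convexHull ℝ (A \ {x})).exists_mem_add_smul_eq hc hd
    (mul_nonneg hu.le hα.le) (mul_nonneg hv.le hβ)
  have hpos : 0 < u * α + v * β := by positivity
  have hxz : (u * α + v * β) • z = (u * α + v * β) • x := by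
    rw [hzeq]
    obtain rfl : u = 1 - v := by linarith
    linear_combination (norm := module) hsum
  exact smul_right_injective E hpos.ne' hxz ▸ hz

theorem notMem_convexHull_insert_of_forall_lt (f : E →ₗ[ℝ] ℝ) (hfe : f e = f x) (hne : e ≠ x)
    (hB : ∀ z ∈ B, f x < f z) : x ∉ convexHull ℝ (insert e B) := by
  rcases B.eq_empty_or_nonempty with rfl | hB_ne
  · simpa using hne.symm
  rw [convexHull_insert hB_ne, mem_convexJoin]
  rintro ⟨_, rfl, d, hd, τ, σ, -, -, hsum, hx⟩
  have hd : f x < f d :=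
    convexHull_min (t := {z | f x < f z}) hB (convex_halfSpace_gt f.isLinear (f x)) hd
  have hfx : τ * f x + σ * f d = f x := by
    simpa [hfe] using congrArg f hx
  obtain rfl : τ = 1 - σ := by linarith
  obtain rfl : σ = 0 := by
    have : σ * (f d - f x) = 0 := by linear_combination hfx
    exact (mul_eq_zero.1 this).resolve_right (sub_pos.2 hd).ne'
  simp [hne] at hx

theorem convexHull_range_eq_image_stdSimplex [Fintype κ] (v : κ → E) :
    convexHull ℝ (Set.range v) = (fun w => ∑ i, w i • v i) '' stdSimplex ℝ κ := by
  classical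
  rw [← convexHull_rangle_single_eq_stdSimplex]
  change _ = Fintype.linearCombination ℝ v '' _
  rw [LinearMap.image_convexHull, ← Set.range_comp]
  congr 2
  ext i
  simp

/-- The indices of the members of the family `ω` that are vertices of the convex hull of the
family and of the fixed set `C`. A repeated member contributes none of its indices. -/
def extremalIndices [Fintype ι] (C : Set E) (ω : ι → E) : Finset ι :=
  open Classical in {i | ω i ∉ convexHull ℝ (ω '' {i}ᶜ ∪ C)}

section Extremal

variable [Fintype ι] {ω : ι → E} {i : ι}

theorem mem_extremalIndices :
    i ∈ extremalIndices C ω ↔ ω i ∉ convexHull ℝ (ω '' {i}ᶜ ∪ C) := by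
  simp [extremalIndices]

theorem card_extremalIndices_comp_equiv [Fintype κ] (e : ι ≃ κ) (ω : κ → E) :
    (extremalIndices C (ω ∘ e)).card = (extremalIndices C ω).card := by
  refine Finset.card_equiv e fun i => ?_
  rw [mem_extremalIndices, mem_extremalIndices, Set.image_comp, Set.image_compl_eq e.bijective,
    Set.image_singleton, Function.comp_apply]

theorem apply_mem_extremePoints_iff (hω : Function.Injective ω) (hi : ω i ∉ C) :
    ω i ∈ (convexHull ℝ (Set.range ω ∪ C)).extremePoints ℝ ↔ i ∈ extremalIndices C ω := by
  rw [mem_extremePoints_convexHull_iff_notMem (Set.mem_union_left C (Set.mem_range_self i)),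
    mem_extremalIndices, Set.union_sdiff_distrib, Set.sdiff_singleton_eq_self hi,
    Set.compl_eq_univ_sdiff, Set.image_sdiff hω, Set.image_univ, Set.image_singleton]

theorem extremePoints_convexHull_range_union (hω : Function.Injective ω)
    (hdisj : Disjoint (Set.range ω) C)
    (hC : C ⊆ (convexHull ℝ (Set.range ω ∪ C)).extremePoints ℝ) :
    (convexHull ℝ (Set.range ω ∪ C)).extremePoints ℝ = ω '' extremalIndices C ω ∪ C := by
  have mem_iff (i : ι) :=
    apply_mem_extremePoints_iff hω (Set.disjoint_left.1 hdisj (Set.mem_range_self i))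
  refine Set.Subset.antisymm (fun z hz => ?_) (Set.union_subset ?_ hC)
  · rcases extremePoints_convexHull_subset hz with ⟨i, rfl⟩ | hzC
    exacts [Or.inl ⟨i, (mem_iff i).1 hz, rfl⟩, Or.inr hzC]
  · rintro _ ⟨i, hi, rfl⟩
    exact (mem_iff i).2 hi

theorem ncard_extremePoints_convexHull_range_union (hω : Function.Injective ω)
    (hdisj : Disjoint (Set.range ω) C) (hfin : C.Finite)
    (hC : C ⊆ (convexHull ℝ (Set.range ω ∪ C)).extremePoints ℝ) :
    ((convexHull ℝ (Set.range ω ∪ C)).extremePoints ℝ).ncard =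
      (extremalIndices C ω).card + C.ncard := by
  rw [extremePoints_convexHull_range_union hω hdisj hC, Set.ncard_union_eq
    (hdisj.mono_left (Set.image_subset_range _ _)) (Set.toFinite _) hfin,
    Set.ncard_image_of_injective _ hω, Set.ncard_coe_finset]

variable [TopologicalSpace E] [T2Space E] [IsTopologicalAddGroup E] [ContinuousSMul ℝ E]

/- By Krein–Milman the hull is spanned by its extreme points, all of which are extremal members of
the family or lie in `C`. -/
theorem forall_mem_convexHull_image_union_iff [LocallyConvexSpace ℝ E]
    (hω : Function.Injective ω) (hfin : C.Finite) (S : Finset ι) :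
    (∀ j, ω j ∈ convexHull ℝ (ω '' S ∪ C)) ↔ extremalIndices C ω ⊆ S := by
  refine ⟨fun h i hi => ?_, fun h j => ?_⟩
  · by_contra hiS
    refine mem_extremalIndices.1 hi (convexHull_mono ?_ (h i))
    exact Set.union_subset_union_left _ (Set.image_mono fun j hj hji => hiS (hji ▸ hj))
  · have hA : (Set.range ω ∪ C).Finite := (Set.finite_range ω).union hfin
    have hext : (convexHull ℝ (Set.range ω ∪ C)).extremePoints ℝ ⊆ ω '' S ∪ C := by
      intro z hz
      by_cases hzC : z ∈ C
      · exact Or.inr hzC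
      obtain ⟨i, rfl⟩ := (extremePoints_convexHull_subset hz).resolve_right hzC
      exact Or.inl ⟨i, h ((apply_mem_extremePoints_iff hω hzC).1 hz), rfl⟩
    have hj : ω j ∈ convexHull ℝ (Set.range ω ∪ C) :=
      subset_convexHull ℝ _ (Or.inl (Set.mem_range_self j))
    rw [← closure_convexHull_extremePoints (hA.isCompact_convexHull (𝕜 := ℝ))
      (convex_convexHull ℝ _),
      ((hA.subset extremePoints_convexHull_subset).isClosed_convexHull (𝕜 := ℝ)).closure_eq] at hj
    exact convexHull_mono hext hj

end Extremal

section Closedness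

variable [Finite ι] [TopologicalSpace E] [T2Space E] [IsTopologicalAddGroup E] [ContinuousSMul ℝ E]

theorem isClosed_setOf_mem_convexHull_range :
    IsClosed {p : (ι → E) × E | p.2 ∈ convexHull ℝ (Set.range p.1)} := by
  have := Fintype.ofFinite ι
  have hK : IsClosed {p : stdSimplex ℝ ι × ((ι → E) × E) | ∑ i, p.1 i • p.2.1 i = p.2.2} := by
    refine isClosed_eq (continuous_finsetSum _ fun i _ => ?_) (by fun_prop)
    have hw : Continuous fun p : stdSimplex ℝ ι × ((ι → E) × E) => p.1 i :=
      (continuous_apply i).comp (continuous_subtype_val.comp continuous_fst)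
    exact hw.smul (by fun_prop)
  convert isClosedMap_snd_of_compactSpace _ hK using 1
  ext ⟨η, z⟩
  simp only [convexHull_range_eq_image_stdSimplex, Set.mem_image, Set.mem_ofPred_eq, Prod.exists,
    Subtype.exists, exists_eq_right]
  exact ⟨fun ⟨w, hw, h⟩ => ⟨w, hw, h⟩, fun ⟨w, hw, h⟩ => ⟨w, hw, h⟩⟩

theorem isClosed_setOf_mem_convexHull_range_union (hfin : C.Finite) :
    IsClosed {p : (ι → E) × E | p.2 ∈ convexHull ℝ (Set.range p.1 ∪ C)} := by
  have := hfin.to_subtype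
  let extend (p : (ι → E) × E) : (ι ⊕ C → E) × E := (Sum.elim p.1 (↑), p.2)
  have hcont : Continuous extend := by
    refine .prodMk (continuous_pi ?_) continuous_snd
    rintro (i | c)
    exacts [(continuous_apply i).comp continuous_fst, continuous_const]
  convert isClosed_setOf_mem_convexHull_range.preimage hcont using 1
  ext p
  simp [extend, Set.Sum.elim_range]

end Closedness

end Convexity

section ProductMeasure

variable {ι κ α : Type*} [Fintype ι] [Fintype κ] [MeasurableSpace α] (μ : Measure α)

theorem measurePreserving_pi_comp [IsProbabilityMeasure μ] {g : ι → κ}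
    (hg : Function.Injective g) :
    MeasurePreserving (fun ω : κ → α => ω ∘ g) (Measure.pi fun _ => μ)
      (Measure.pi fun _ => μ) := by
  refine ⟨by fun_prop, ?_⟩
  have hindep : ProbabilityTheory.iIndepFun (fun (k : κ) (ω : κ → α) => ω k)
      (Measure.pi fun _ => μ) :=
    ProbabilityTheory.iIndepFun_pi (X := fun _ => id) fun _ => aemeasurable_id
  refine ((ProbabilityTheory.iIndepFun_iff_map_fun_eq_pi_map
    fun i => (measurable_pi_apply (g i)).aemeasurable).1 (hindep.precomp hg)).trans ?_
  simp_rw [(measurePreserving_eval (fun _ : κ => μ) _).map_eq]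

variable {μ}

theorem ae_pi_forall [IsProbabilityMeasure μ] {p : α → Prop} (h : ∀ᵐ x ∂μ, p x) :
    ∀ᵐ ω ∂Measure.pi fun _ : ι => μ, ∀ i, p (ω i) :=
  ae_all_iff.2 fun _ => Measure.tendsto_eval_ae_ae.eventually h

theorem ae_pi_pairwise [IsProbabilityMeasure μ] {r : α → α → Prop}
    (hr : MeasurableSet {p : α × α | r p.1 p.2}) (h : ∀ᵐ x ∂μ, ∀ᵐ y ∂μ, r x y) :
    ∀ᵐ ω ∂Measure.pi fun _ : ι => μ, Pairwise fun i j => r (ω i) (ω j) := by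
  refine ae_all_iff.2 fun i => ae_all_iff.2 fun j => Filter.eventually_imp_distrib_left.2 ?_
  intro hij
  have hg : Function.Injective ![i, j] := by
    simp [Function.Injective, Fin.forall_fin_two, hij, hij.symm]
  have hprod : ∀ᵐ p ∂μ.prod μ, r p.1 p.2 :=
    (Measure.ae_prod_mem_iff_ae_ae_mem hr).2 h
  exact ((measurePreserving_finTwoArrow μ).comp
    (measurePreserving_pi_comp μ hg)).quasiMeasurePreserving.ae hprod

variable (μ)

theorem ae_pi_injective [IsProbabilityMeasure μ] [NullSingletonClass μ] [MeasurableEq α] :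
    ∀ᵐ ω ∂Measure.pi fun _ : ι => μ, Function.Injective ω := by
  filter_upwards [ae_pi_pairwise measurableSet_diagonal.compl (.of_forall fun x =>
    (measure_eq_zero_iff_ae_notMem.1 (measure_singleton (μ := μ) x)).mono
      fun y hy => Ne.symm hy)] with ω hω
  exact Function.injective_iff_pairwise_ne.2 hω

theorem pi_setOf_forall_notMem [IsProbabilityMeasure μ] (S : Finset ι)
    {R : Set ((S → α) × α)} (hR : MeasurableSet R) :
    (Measure.pi fun _ : ι => μ) {ω | ∀ j ∉ S, (S.restrict ω, ω j) ∈ R} =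
      ∫⁻ η, μ (Prod.mk η ⁻¹' R) ^ (Fintype.card ι - S.card) ∂Measure.pi fun _ => μ := by
  classical
  have hsplit := measurePreserving_piEquivPiSubtypeProd (fun _ : ι => μ) (· ∈ S)
  let W : Set ((S → α) × ({j // j ∉ S} → α)) := ⋂ j, {x | (x.1, x.2 j) ∈ R}
  have hW : MeasurableSet W := .iInter fun j => hR.preimage (by fun_prop)
  have hWpre : {ω : ι → α | ∀ j ∉ S, (S.restrict ω, ω j) ∈ R} =
      MeasurableEquiv.piEquivPiSubtypeProd (fun _ : ι => α) (· ∈ S) ⁻¹' W := by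
    ext ω
    simp only [Set.mem_preimage, W, Set.mem_iInter, Set.mem_ofPred_eq, Subtype.forall]
    rfl
  rw [hWpre, hsplit.measure_preimage hW.nullMeasurableSet, Measure.prod_apply hW]
  convert rfl using 3 with η
  have hfiber : Prod.mk η ⁻¹' W = Set.univ.pi fun _ => Prod.mk η ⁻¹' R := by
    ext ζ
    simp [W]
  rw [hfiber, Measure.pi_pi, Finset.prod_const, Finset.card_univ, Fintype.card_subtype_compl,
    Fintype.card_coe]

theorem pi_smul_measure (k : ι → NNReal) (μ : ι → Measure α) [∀ i, IsFiniteMeasure (μ i)] :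
    Measure.pi (fun i => k i • μ i) = (∏ i, k i) • Measure.pi μ := by
  refine Measure.pi_eq fun s _ => ?_
  simp only [Measure.smul_apply, Measure.pi_pi, ENNReal.smul_def, smul_eq_mul,
    Finset.prod_mul_distrib, ENNReal.ofNNReal_finsetProd]

theorem pi_add_measure [DecidableEq ι] (μ ν : Measure α) [IsFiniteMeasure μ] [IsFiniteMeasure ν] :
    Measure.pi (fun _ : ι => μ + ν) =
      ∑ J : Finset ι, Measure.pi (fun i => if i ∈ J then μ else ν) := by
  have (J : Finset ι) (i : ι) : IsFiniteMeasure (if i ∈ J then μ else ν) := by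
    split_ifs <;> infer_instance
  refine Measure.pi_eq fun s _ => ?_
  simp only [Measure.finsetSum_apply, Measure.pi_pi, Measure.add_apply]
  rw [Finset.prod_add, Finset.powerset_univ]
  refine Finset.sum_congr rfl fun J _ => ?_
  rw [← Finset.compl_eq_univ_sdiff, ← Finset.prod_mul_prod_compl J]
  refine congrArg₂ _ (Finset.prod_congr rfl fun i hi => ?_) (Finset.prod_congr rfl fun i hi => ?_)
  · rw [if_pos hi]
  · rw [if_neg (Finset.mem_compl.1 hi)]

theorem prod_ite_mem_const {R : Type*} [CommMonoid R] [DecidableEq ι] (J : Finset ι) (a b : R) :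
    ∏ i, (if i ∈ J then a else b) = a ^ J.card * b ^ (Fintype.card ι - J.card) := by
  rw [Finset.prod_ite, Finset.prod_const, Finset.prod_const, Finset.filter_mem_eq_inter,
    Finset.univ_inter, Finset.filter_notMem_eq_sdiff, Finset.card_univ_sdiff]

theorem pi_smul_map_add_smul_map [IsProbabilityMeasure μ] [DecidableEq ι] {β : Type*}
    [MeasurableSpace β] {φ ψ : α → β} (hφ : Measurable φ) (hψ : Measurable ψ) (c₁ c₂ : NNReal) :
    Measure.pi (fun _ : ι => c₁ • μ.map φ + c₂ • μ.map ψ) =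
      ∑ J : Finset ι, (c₁ ^ J.card * c₂ ^ (Fintype.card ι - J.card)) •
        (Measure.pi fun _ => μ).map fun ω i => if i ∈ J then φ (ω i) else ψ (ω i) := by
  rw [pi_add_measure]
  refine Finset.sum_congr rfl fun J _ => ?_
  have hmeas (i : ι) : Measurable (if i ∈ J then φ else ψ) := by split_ifs <;> assumption
  have (i : ι) : IsProbabilityMeasure (μ.map (if i ∈ J then φ else ψ)) :=
    Measure.isProbabilityMeasure_map (hmeas i).aemeasurable
  have hmap : (Measure.pi fun _ => μ).map (fun ω i => if i ∈ J then φ (ω i) else ψ (ω i)) =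
      Measure.pi fun i => μ.map (if i ∈ J then φ else ψ) := by
    rw [← Measure.pi_map_pi fun i => (hmeas i).aemeasurable]
    congr! 3 with ω i
    split_ifs <;> rfl
  rw [hmap, ← prod_ite_mem_const, ← pi_smul_measure]
  congr! 2 with i
  split_ifs <;> rfl

end ProductMeasure

section RandomHull

variable {ι E : Type*} [Fintype ι] [AddCommGroup E] [Module ℝ E] [MeasurableSpace E]

/-- The law of the number of vertices, other than the points of `C`, of the convex hull of `C` and
`n` independent points with law `μ`. -/
def extremalCountLaw (C : Set E) (μ : Measure E) (n : ℕ) : Measure ℕ :=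
  (Measure.pi fun _ : Fin n => μ).map fun ω => (extremalIndices C ω).card

theorem integral_measureReal_convexHull_range_pow (C : Set E) (μ : Measure E)
    [SigmaFinite μ] {κ : Type*} [Fintype κ] (e : ι ≃ κ) (k : ℕ) :
    ∫ ω, μ.real (convexHull ℝ (Set.range ω ∪ C)) ^ k ∂Measure.pi (fun _ : ι => μ) =
      ∫ ω, μ.real (convexHull ℝ (Set.range ω ∪ C)) ^ k ∂Measure.pi (fun _ : κ => μ) := by
  rw [← ((measurePreserving_piCongrLeft (fun _ => μ) e).integral_comp' _)]
  congr! 6 with ω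
  rw [← e.surjective.range_comp]
  exact congrArg Set.range (funext fun i =>
    (MeasurableEquiv.piCongrLeft_apply_apply (β := fun _ => E) e ω i).symm)

variable [TopologicalSpace E] [T2Space E] [IsTopologicalAddGroup E] [ContinuousSMul ℝ E]
  [BorelSpace E] [SecondCountableTopology E] {C : Set E} (μ : Measure E)

theorem measurableSet_setOf_mem_extremalIndices (hC : C.Finite) (i : ι) :
    MeasurableSet {ω : ι → E | i ∈ extremalIndices C ω} := by
  have hclosed := isClosed_setOf_mem_convexHull_range_union (ι := {j // j ≠ i}) hC
  have hsplit : Measurable fun ω : ι → E => ((fun j : {j // j ≠ i} => ω j), ω i) := by fun_prop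
  convert (hsplit hclosed.measurableSet).compl using 1
  ext ω
  rw [Set.mem_ofPred_eq, mem_extremalIndices, Set.image_eq_range]
  rfl

theorem measurable_card_extremalIndices (hC : C.Finite) :
    Measurable fun ω : ι → E => (extremalIndices C ω).card := by
  classical
  have hcard (ω : ι → E) : (extremalIndices C ω).card =
      ∑ i, if i ∈ extremalIndices C ω then 1 else 0 := by simp
  simp_rw [hcard]
  exact Finset.measurable_fun_sum _ fun i _ =>
    .ite (measurableSet_setOf_mem_extremalIndices hC i) measurable_const measurable_const

theorem isProbabilityMeasure_extremalCountLaw [IsProbabilityMeasure μ] (hC : C.Finite) (n : ℕ) :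
    IsProbabilityMeasure (extremalCountLaw C μ n) :=
  Measure.isProbabilityMeasure_map (measurable_card_extremalIndices hC).aemeasurable

theorem ae_extremalCountLaw_le (hC : C.Finite) (n : ℕ) :
    ∀ᵐ k ∂extremalCountLaw C μ n, k ≤ n := by
  refine (ae_map_iff (measurable_card_extremalIndices hC).aemeasurable measurableSet_Iic).2 ?_
  exact .of_forall fun ω => (Finset.card_le_univ _).trans_eq (Fintype.card_fin n)

theorem map_card_extremalIndices_restrict [IsProbabilityMeasure μ] (hC : C.Finite)
    (J : Finset ι) :
    (Measure.pi fun _ : ι => μ).map (fun ω => (extremalIndices C (J.restrict ω)).card) =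
      extremalCountLaw C μ J.card := by
  let g (k : Fin J.card) : ι := J.equivFin.symm k
  have hg : Function.Injective g := Subtype.val_injective.comp J.equivFin.symm.injective
  rw [extremalCountLaw, ← (measurePreserving_pi_comp μ hg).map_eq,
    Measure.map_map (measurable_card_extremalIndices hC) (by fun_prop)]
  congr 1
  ext ω
  exact (card_extremalIndices_comp_equiv J.equivFin.symm (J.restrict ω)).symm

theorem measurableSet_setOf_forall_mem_convexHull {ι : Type*} [Finite ι] (hC : C.Finite)
    (S : Finset ι) :
    MeasurableSet {ω : ι → E | ∀ j, ω j ∈ convexHull ℝ (ω '' S ∪ C)} := by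
  have hR := (isClosed_setOf_mem_convexHull_range_union (ι := S) hC).measurableSet
  simp_rw [Set.image_eq_range, Set.ofPred_forall]
  have hsplit (j : ι) : Measurable fun ω : ι → E => ((fun i : S => ω i), ω j) := by fun_prop
  exact .iInter fun j => hsplit j hR

theorem measureReal_setOf_forall_mem_convexHull [IsProbabilityMeasure μ] (hC : C.Finite)
    (S : Finset ι) :
    (Measure.pi fun _ : ι => μ).real {ω | ∀ j, ω j ∈ convexHull ℝ (ω '' S ∪ C)} =
      ∫ ω, μ.real (convexHull ℝ (Set.range ω ∪ C)) ^ (Fintype.card ι - S.card)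
        ∂Measure.pi fun _ : Fin S.card => μ := by
  let R : Set ((S → E) × E) := {p | p.2 ∈ convexHull ℝ (Set.range p.1 ∪ C)}
  have hR : MeasurableSet R := (isClosed_setOf_mem_convexHull_range_union hC).measurableSet
  have hset : {ω : ι → E | ∀ j, ω j ∈ convexHull ℝ (ω '' S ∪ C)} =
      {ω : ι → E | ∀ j ∉ S, (S.restrict ω, ω j) ∈ R} := by
    ext ω
    change _ ↔ ∀ j ∉ S, ω j ∈ convexHull ℝ (Set.range (fun i : S => ω i) ∪ C)
    simp only [Set.mem_ofPred_eq, Set.image_eq_range]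
    refine ⟨fun h j _ => h j, fun h j => ?_⟩
    by_cases hj : j ∈ S
    exacts [subset_convexHull ℝ _ (Or.inl ⟨⟨j, hj⟩, rfl⟩), h j hj]
  rw [measureReal_def, hset, pi_setOf_forall_notMem μ S hR,
    ← integral_measureReal_convexHull_range_pow C μ S.equivFin, ← integral_toReal
      ((measurable_measure_prodMk_left hR).pow_const _).aemeasurable
      (.of_forall fun η => ENNReal.pow_lt_top (measure_lt_top _ _))]
  simp_rw [ENNReal.toReal_pow]
  rfl

end RandomHull

section Efron

variable {R : Type*} [CommRing R]

theorem sum_superset_pow_card_mul_pow_card_compl {ι : Type*} [Fintype ι] [DecidableEq ι]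
    (A : Finset ι) (x y : R) :
    ∑ S : Finset ι, (if A ⊆ S then x ^ S.card * y ^ (Fintype.card ι - S.card) else 0) =
      x ^ A.card * (x + y) ^ (Fintype.card ι - A.card) := by
  have hsummand (S : Finset ι) :
      (if A ⊆ S then x ^ S.card * y ^ (Fintype.card ι - S.card) else 0) =
        (∏ _i ∈ S, x) * ∏ i ∈ Finset.univ \ S, if i ∈ A then 0 else y := by
    split_ifs with hAS
    · rw [Finset.prod_const, Finset.prod_congr rfl fun i hi =>
        if_neg fun hiA => (Finset.mem_sdiff.1 hi).2 (hAS hiA), Finset.prod_const,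
        Finset.card_univ_sdiff]
    · obtain ⟨i, hiA, hiS⟩ := Finset.not_subset.1 hAS
      have hzero : ∏ j ∈ Finset.univ \ S, (if j ∈ A then 0 else y) = 0 :=
        Finset.prod_eq_zero (Finset.mem_sdiff.2 ⟨Finset.mem_univ i, hiS⟩) (if_pos hiA)
      rw [hzero, mul_zero]
  simp_rw [hsummand]
  rw [← Finset.powerset_univ, ← Finset.prod_add, ← prod_ite_mem_const]
  refine Finset.prod_congr rfl fun i _ => ?_
  split_ifs
  exacts [add_zero x, rfl]

variable {E : Type*} [AddCommGroup E] [Module ℝ E] [MeasurableSpace E]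
  [TopologicalSpace E] [T2Space E] [IsTopologicalAddGroup E] [ContinuousSMul ℝ E]
  [LocallyConvexSpace ℝ E] [BorelSpace E] [SecondCountableTopology E] {C : Set E} (μ : Measure E)

/- Efron's argument: given a subset `S` of the sample, the other points lie in the hull of `S`
exactly when `S` contains all the extremal points. -/
theorem sum_choose_mul_integral_measureReal_convexHull_pow [IsProbabilityMeasure μ]
    [NullSingletonClass μ] (hC : C.Finite) (l : ℕ) (x y : ℝ) :
    ∑ p ∈ Finset.HasAntidiagonal.antidiagonal l, (l.choose p.1 : ℝ) *
      (∫ ω, μ.real (convexHull ℝ (Set.range ω ∪ C)) ^ p.2 ∂Measure.pi fun _ : Fin p.1 => μ) *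
        x ^ p.1 * y ^ p.2 =
      ∫ k, x ^ k * (x + y) ^ (l - k) ∂extremalCountLaw C μ l := by
  let A (S : Finset (Fin l)) : Set (Fin l → E) := {ω | ∀ j, ω j ∈ convexHull ℝ (ω '' S ∪ C)}
  have hA (S : Finset (Fin l)) : MeasurableSet (A S) :=
    measurableSet_setOf_forall_mem_convexHull hC S
  have hprob (S : Finset (Fin l)) :
      (∫ ω, μ.real (convexHull ℝ (Set.range ω ∪ C)) ^ (l - S.card)
        ∂Measure.pi fun _ : Fin S.card => μ) * (x ^ S.card * y ^ (l - S.card)) =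
      ∫ ω, (A S).indicator (fun _ => x ^ S.card * y ^ (l - S.card)) ω
        ∂Measure.pi fun _ => μ := by
    rw [integral_indicator_const _ (hA S), smul_eq_mul,
      measureReal_setOf_forall_mem_convexHull μ hC, Fintype.card_fin]
  have hcount : ∑ p ∈ Finset.HasAntidiagonal.antidiagonal l, (l.choose p.1 : ℝ) *
      (∫ ω, μ.real (convexHull ℝ (Set.range ω ∪ C)) ^ p.2 ∂Measure.pi fun _ : Fin p.1 => μ) *
        x ^ p.1 * y ^ p.2 =
      ∑ S : Finset (Fin l), (∫ ω, μ.real (convexHull ℝ (Set.range ω ∪ C)) ^ (l - S.card)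
        ∂Measure.pi fun _ : Fin S.card => μ) * (x ^ S.card * y ^ (l - S.card)) := by
    rw [← Finset.powerset_univ, Finset.sum_powerset_apply_card fun j =>
      (∫ ω, μ.real (convexHull ℝ (Set.range ω ∪ C)) ^ (l - j) ∂Measure.pi fun _ : Fin j => μ) *
        (x ^ j * y ^ (l - j)), Finset.Nat.sum_antidiagonal_eq_sum_range_succ_mk]
    simp only [Finset.card_univ, Fintype.card_fin, nsmul_eq_mul, mul_assoc, Nat.succ_eq_add_one]
  rw [hcount, Finset.sum_congr rfl fun S _ => hprob S, ← integral_finsetSum _ fun S _ =>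
    (integrable_const _).indicator (hA S), extremalCountLaw, integral_map
      (measurable_card_extremalIndices hC).aemeasurable (by fun_prop)]
  refine integral_congr_ae ?_
  filter_upwards [ae_pi_injective μ] with ω hω
  have hsum := sum_superset_pow_card_mul_pow_card_compl (extremalIndices C ω) x y
  rw [Fintype.card_fin] at hsum
  rw [← hsum]
  refine Finset.sum_congr rfl fun S _ => ?_
  classical
  rw [Set.indicator_apply]
  exact if_congr (forall_mem_convexHull_image_union_iff hω hC S) rfl rfl

end Efron

section AffineMeasure

variable {E : Type*} [NormedAddCommGroup E] [NormedSpace ℝ E] [FiniteDimensional ℝ E]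
  [MeasurableSpace E] [BorelSpace E] {f : E →ᵃ[ℝ] E}

theorem measurableEmbedding_affineMap (hf : LinearMap.det f.linear ≠ 0) : MeasurableEmbedding f :=
  f.continuous_of_finiteDimensional.measurableEmbedding <| f.linear_injective_iff.1
    (LinearMap.equivOfDetNeZero f.linear hf).injective

theorem restrict_image_affineMap (μ : Measure E) [μ.IsAddHaarMeasure]
    (hf : LinearMap.det f.linear ≠ 0) (S : Set E) :
    μ.restrict (f '' S) =
      ENNReal.ofReal |LinearMap.det f.linear| • (μ.restrict S).map f := by
  have hemb := measurableEmbedding_affineMap hf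
  have hlin : Measurable f.linear := f.linear.continuous_of_finiteDimensional.measurable
  have hmap : μ.map f = ENNReal.ofReal |(LinearMap.det f.linear)⁻¹| • μ := by
    rw [f.decomp, ← Measure.map_linearMap_addHaar_eq_smul_addHaar μ hf]
    change μ.map ((· + f 0) ∘ f.linear) = _
    rw [← Measure.map_map (by fun_prop) hlin, Measure.map_linearMap_addHaar_eq_smul_addHaar μ hf,
      Measure.map_smul, map_add_right_eq_self]
  have hμ : μ = ENNReal.ofReal |LinearMap.det f.linear| • μ.map f := by
    rw [hmap, smul_smul, ← ENNReal.ofReal_mul (abs_nonneg _), ← abs_mul, mul_inv_cancel₀ hf,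
      abs_one, ENNReal.ofReal_one, one_smul]
  conv_lhs => rw [hμ]
  rw [Measure.restrict_smul, hemb.restrict_map, Set.preimage_image_eq _ hemb.injective]

end AffineMeasure

section Triangle

/-- Twice the signed area of the triangle `p q r`. -/
def orient (p q r : ℝ × ℝ) : ℝ := (q.1 - p.1) * (r.2 - p.2) - (q.2 - p.2) * (r.1 - p.1)

theorem ae_orient_ne_zero {p q : ℝ × ℝ} (hpq : p ≠ q) : ∀ᵐ z : ℝ × ℝ, orient p q z ≠ 0 := by
  let L : ℝ × ℝ →ₗ[ℝ] ℝ :=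
    (q.1 - p.1) • LinearMap.snd ℝ ℝ ℝ - (q.2 - p.2) • LinearMap.fst ℝ ℝ ℝ
  have hL : LinearMap.ker L ≠ ⊤ := fun h => hpq <| by
    rw [LinearMap.ker_eq_top] at h
    have h1 := LinearMap.congr_fun h (0, 1)
    have h2 := LinearMap.congr_fun h (1, 0)
    simp [L] at h1 h2
    ext <;> linarith
  have hset : {z | ¬orient p q z ≠ 0} = (· + -p) ⁻¹' (LinearMap.ker L : Set (ℝ × ℝ)) := by
    ext z
    simp [orient, L, sub_eq_add_neg]
  rw [ae_iff, hset, measure_preimage_add_right]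
  exact Measure.addHaar_submodule volume _ hL

/-- The affine map sending `(0, 0)`, `(1, 0)`, `(0, 1)` to `p`, `q`, `r`. -/
def triangleMap (p q r : ℝ × ℝ) : ℝ × ℝ →ᵃ[ℝ] ℝ × ℝ :=
  ((LinearMap.fst ℝ ℝ ℝ).smulRight (q - p) + (LinearMap.snd ℝ ℝ ℝ).smulRight (r - p)).toAffineMap
    + AffineMap.const ℝ (ℝ × ℝ) p

theorem triangleMap_apply (p q r z : ℝ × ℝ) :
    triangleMap p q r z = z.1 • (q - p) + z.2 • (r - p) + p := rfl

theorem measurable_triangleMap (p q r : ℝ × ℝ) : Measurable (triangleMap p q r) :=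
  (triangleMap p q r).continuous_of_finiteDimensional.measurable

theorem det_triangleMap_linear (p q r : ℝ × ℝ) :
    LinearMap.det (triangleMap p q r).linear = orient p q r := by
  have h : (triangleMap p q r).linear = Matrix.toLin (Module.Basis.finTwoProd ℝ)
      (Module.Basis.finTwoProd ℝ) !![q.1 - p.1, r.1 - p.1; q.2 - p.2, r.2 - p.2] := by
    refine LinearMap.ext fun z => ?_
    ext <;> simp [triangleMap, Matrix.toLin_finTwoProd_apply, mul_comm]
  rw [h, LinearMap.det_toLin, Matrix.det_fin_two_of, orient]
  ring

/-- The interior of `T`. -/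
def openTriangle : Set (ℝ × ℝ) := {z | 0 < z.1 ∧ 0 < z.2 ∧ z.1 + z.2 < 1}

theorem T_eq : T = {z : ℝ × ℝ | 0 ≤ z.1 ∧ 0 ≤ z.2 ∧ z.1 + z.2 ≤ 1} := by
  have hconvex : Convex ℝ {z : ℝ × ℝ | 0 ≤ z.1 ∧ 0 ≤ z.2 ∧ z.1 + z.2 ≤ 1} :=
    (convex_halfSpace_ge (LinearMap.fst ℝ ℝ ℝ).isLinear 0).inter
      ((convex_halfSpace_ge (LinearMap.snd ℝ ℝ ℝ).isLinear 0).inter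
        (convex_halfSpace_le (LinearMap.fst ℝ ℝ ℝ + LinearMap.snd ℝ ℝ ℝ).isLinear 1))
  refine (convexHull_min ?_ hconvex).antisymm fun z ⟨h1, h2, h12⟩ => ?_
  · rintro z (rfl | rfl | rfl) <;> norm_num
  · have hsum := (convex_convexHull ℝ ({(0, 0), (1, 0), (0, 1)} : Set (ℝ × ℝ))).sum_mem
      (t := Finset.univ) (w := ![1 - z.1 - z.2, z.1, z.2]) (z := ![(0, 0), (1, 0), (0, 1)])
      (by simp [Fin.forall_fin_succ]; grind) (by simp [Fin.sum_univ_three]; ring)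
      (fun i _ => subset_convexHull ℝ _ (by fin_cases i <;> simp))
    simpa [Fin.sum_univ_three] using hsum

theorem openTriangle_subset_T : openTriangle ⊆ T := by
  rw [T_eq]
  exact fun z ⟨h1, h2, h12⟩ => ⟨h1.le, h2.le, h12.le⟩

theorem isOpen_openTriangle : IsOpen openTriangle :=
  (isOpen_lt continuous_const continuous_fst).inter
    ((isOpen_lt continuous_const continuous_snd).inter
      (isOpen_lt (continuous_fst.add continuous_snd) continuous_const))

theorem T_ae_eq_openTriangle : T =ᵐ[volume] openTriangle := by
  refine Filter.eventuallyEq_set.2 ?_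
  filter_upwards [ae_orient_ne_zero (p := (0, 0)) (q := (1, 0)) (by simp),
    ae_orient_ne_zero (p := (0, 0)) (q := (0, 1)) (by simp),
    ae_orient_ne_zero (p := (1, 0)) (q := (0, 1)) (by simp)] with z h2 h1 h12
  simp only [orient] at h1 h2 h12
  refine ⟨fun hz => ?_, fun hz => openTriangle_subset_T hz⟩
  obtain ⟨hz1, hz2, hz12⟩ : z ∈ {z : ℝ × ℝ | 0 ≤ z.1 ∧ 0 ≤ z.2 ∧ z.1 + z.2 ≤ 1} := T_eq ▸ hz
  exact ⟨hz1.lt_of_ne (by grind), hz2.lt_of_ne (by grind), hz12.lt_of_ne (by grind)⟩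

theorem mem_triangleMap_image_openTriangle_iff {p q r : ℝ × ℝ} (h : 0 < orient p q r)
    (z : ℝ × ℝ) : z ∈ triangleMap p q r '' openTriangle ↔
      0 < orient p z r ∧ 0 < orient p q z ∧ 0 < orient z q r := by
  have hcoord (w : ℝ × ℝ) : orient p (triangleMap p q r w) r = w.1 * orient p q r ∧
      orient p q (triangleMap p q r w) = w.2 * orient p q r ∧
      orient (triangleMap p q r w) q r = (1 - w.1 - w.2) * orient p q r := by
    simp only [orient, triangleMap_apply, Prod.fst_add, Prod.snd_add, Prod.smul_fst,
      Prod.smul_snd, Prod.fst_sub, Prod.snd_sub, smul_eq_mul]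
    exact ⟨by ring, by ring, by ring⟩
  have hmem (w : ℝ × ℝ) : w ∈ openTriangle ↔ 0 < w.1 ∧ 0 < w.2 ∧ 0 < 1 - w.1 - w.2 := by
    rw [openTriangle, Set.mem_ofPred_eq]
    grind
  constructor
  · rintro ⟨w, hw, rfl⟩
    obtain ⟨h1, h2, h3⟩ := hcoord w
    rwa [h1, h2, h3, mul_pos_iff_of_pos_right h, mul_pos_iff_of_pos_right h,
      mul_pos_iff_of_pos_right h, ← hmem]
  · intro hz
    let w : ℝ × ℝ := (orient p z r / orient p q r, orient p q z / orient p q r)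
    have hw : triangleMap p q r w = z := by
      have h0 := h.ne'
      rw [triangleMap_apply]
      ext <;> simp only [w, Prod.fst_add, Prod.snd_add, Prod.smul_fst, Prod.smul_snd,
        Prod.fst_sub, Prod.snd_sub, smul_eq_mul] <;> field_simp <;> simp only [orient] <;> ring
    obtain ⟨h1, h2, h3⟩ := hcoord w
    rw [hw] at h1 h2 h3
    rw [h1, h2, h3, mul_pos_iff_of_pos_right h, mul_pos_iff_of_pos_right h,
      mul_pos_iff_of_pos_right h, ← hmem] at hz
    exact ⟨w, hz, hw⟩

end Triangle

section UniformMeasure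

theorem setLIntegral_regionBetween {α : Type*} [MeasurableSpace α] (μ : Measure α) [SFinite μ]
    {f g : α → ℝ} {s : Set α} (hf : Measurable f) (hg : Measurable g) (hs : MeasurableSet s)
    {F : α × ℝ → ENNReal} (hF : Measurable F) :
    ∫⁻ p in regionBetween f g s, F p ∂μ.prod volume =
      ∫⁻ x in s, (∫⁻ y in Set.Ioo (f x) (g x), F (x, y)) ∂μ := by
  have hregion := measurableSet_regionBetween hf hg hs
  rw [← lintegral_indicator hregion, lintegral_prod _ (hF.indicator hregion).aemeasurable,
    ← lintegral_indicator hs]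
  refine lintegral_congr fun x => ?_
  by_cases hx : x ∈ s
  · rw [Set.indicator_of_mem hx, ← lintegral_indicator measurableSet_Ioo]
    simp [Set.indicator, regionBetween, hx]
  · simp [Set.indicator, regionBetween, hx]

theorem openTriangle_eq_regionBetween :
    openTriangle = regionBetween (fun _ => 0) (fun x => 1 - x) (Set.Ioo 0 1) := by
  ext z
  simp only [openTriangle, regionBetween, Set.mem_ofPred_eq, Set.mem_Ioo]
  grind

theorem μT_eq_smul_restrict_openTriangle :
    μT = (2 : ENNReal) • volume.restrict openTriangle := by
  rw [μT, Measure.restrict_congr_set T_ae_eq_openTriangle]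

theorem lintegral_μT {F : ℝ × ℝ → ENNReal} (hF : Measurable F) :
    ∫⁻ z, F z ∂μT =
      2 * ∫⁻ x in Set.Ioo (0 : ℝ) 1, ∫⁻ y in Set.Ioo 0 (1 - x), F (x, y) := by
  rw [μT_eq_smul_restrict_openTriangle, lintegral_smul_measure, openTriangle_eq_regionBetween,
    Measure.volume_eq_prod, setLIntegral_regionBetween volume measurable_const (by fun_prop)
      measurableSet_Ioo hF, smul_eq_mul]

theorem setLIntegral_Ioo_ofReal_eq_intervalIntegral {f : ℝ → ℝ} {a b : ℝ} (hab : a ≤ b)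
    (hf : ContinuousOn f (Set.Icc a b)) (hf0 : ∀ x ∈ Set.Ioo a b, 0 ≤ f x) :
    ∫⁻ x in Set.Ioo a b, ENNReal.ofReal (f x) = ENNReal.ofReal (∫ x in a..b, f x) := by
  rw [intervalIntegral.integral_of_le hab, integral_Ioc_eq_integral_Ioo,
    ofReal_integral_eq_lintegral_ofReal (hf.integrableOn_Icc.mono_set Set.Ioo_subset_Icc_self)]
  exact (ae_restrict_iff' measurableSet_Ioo).2 (.of_forall hf0)

instance : IsProbabilityMeasure μT where
  measure_univ := by
    have h : ∫ x in (0 : ℝ)..1, (1 - x) = 1 / 2 := by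
      rw [intervalIntegral.integral_comp_sub_left (fun u => u) 1]
      norm_num
    rw [← lintegral_one, lintegral_μT measurable_const]
    simp only [lintegral_one, Measure.restrict_apply_univ, Real.volume_Ioo, sub_zero]
    rw [setLIntegral_Ioo_ofReal_eq_intervalIntegral zero_le_one (by fun_prop)
      (fun x hx => sub_nonneg.2 hx.2.le), h, ← ENNReal.ofReal_ofNat,
      ← ENNReal.ofReal_mul zero_le_two]
    norm_num

theorem absolutelyContinuous_μT : μT ≪ volume :=
  Measure.smul_absolutelyContinuous.trans Measure.restrict_le_self.absolutelyContinuous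

instance : NullSingletonClass μT := ⟨fun z => absolutelyContinuous_μT (measure_singleton z)⟩

theorem ae_mem_openTriangle : ∀ᵐ z ∂μT, z ∈ openTriangle := by
  rw [μT_eq_smul_restrict_openTriangle]
  exact Measure.ae_smul_measure (ae_restrict_mem isOpen_openTriangle.measurableSet) _

end UniformMeasure

section Splitting

/-- The absolute value of the slope of the line through `(1, 0)` and `z`. -/
def cornerSlope (z : ℝ × ℝ) : ℝ := z.2 / (1 - z.1)

theorem measurable_cornerSlope : Measurable cornerSlope := by
  unfold cornerSlope
  fun_prop

theorem cornerSlope_mul_one_sub_fst {z : ℝ × ℝ} (hz : z ∈ openTriangle) :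
    cornerSlope z * (1 - z.1) = z.2 := by
  obtain ⟨_, h2, h12⟩ := hz
  exact div_mul_cancel₀ _ (by linarith)

theorem cornerSlope_mem_Ioo {z : ℝ × ℝ} (hz : z ∈ openTriangle) : cornerSlope z ∈ Set.Ioo 0 1 := by
  obtain ⟨_, h2, h12⟩ := hz
  have h : 0 < 1 - z.1 := by linarith
  exact ⟨div_pos h2 h, (div_lt_one h).2 (by linarith)⟩

theorem orient_one_zero_eq_mul_cornerSlope_sub {p z : ℝ × ℝ} (hp : p ∈ openTriangle)
    (hz : z ∈ openTriangle) :
    orient p (1, 0) z = (1 - p.1) * (1 - z.1) * (cornerSlope z - cornerSlope p) := by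
  simp only [orient]
  linear_combination (-(1 - p.1)) * cornerSlope_mul_one_sub_fst hz +
    (1 - z.1) * cornerSlope_mul_one_sub_fst hp

theorem cornerSlope_lt_iff {p z : ℝ × ℝ} (hp : p ∈ openTriangle) (hz : z ∈ openTriangle) :
    cornerSlope p < cornerSlope z ↔ 0 < orient p (1, 0) z := by
  have h : 0 < (1 - p.1) * (1 - z.1) :=
    mul_pos (by linarith [hp.2.1, hp.2.2]) (by linarith [hz.2.1, hz.2.2])
  rw [orient_one_zero_eq_mul_cornerSlope_sub hp hz, mul_pos_iff_of_pos_left h, sub_pos]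

theorem ae_cornerSlope_ne {p : ℝ × ℝ} (hp : p ∈ openTriangle) :
    ∀ᵐ z ∂μT, cornerSlope p ≠ cornerSlope z := by
  have hne : p ≠ (1, 0) := by
    rintro rfl
    exact lt_irrefl _ hp.2.1
  filter_upwards [ae_mem_openTriangle, absolutelyContinuous_μT.ae_le (ae_orient_ne_zero hne)]
    with z hz horient hslope
  rw [orient_one_zero_eq_mul_cornerSlope_sub hp hz, hslope, sub_self, mul_zero] at horient
  exact horient rfl

/-- The affine map of `T` onto the triangle with vertices `(0, cornerSlope p)`, `p`, `(0, 1)`. -/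
def leftMap (p : ℝ × ℝ) : ℝ × ℝ →ᵃ[ℝ] ℝ × ℝ := triangleMap (0, cornerSlope p) p (0, 1)

/-- The affine map of `T` onto the triangle with vertices `p`, `(1, 0)`, `(0, 1)`. -/
def rightMap (p : ℝ × ℝ) : ℝ × ℝ →ᵃ[ℝ] ℝ × ℝ := triangleMap p (1, 0) (0, 1)

theorem orient_leftMap (p : ℝ × ℝ) :
    orient (0, cornerSlope p) p (0, 1) = p.1 * (1 - cornerSlope p) := by
  simp [orient]

theorem orient_rightMap (p : ℝ × ℝ) : orient p (1, 0) (0, 1) = 1 - p.1 - p.2 := by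
  simp only [orient]
  ring

theorem orient_leftMap_pos {p : ℝ × ℝ} (hp : p ∈ openTriangle) :
    0 < orient (0, cornerSlope p) p (0, 1) := by
  rw [orient_leftMap]
  exact mul_pos hp.1 (sub_pos.2 (cornerSlope_mem_Ioo hp).2)

theorem orient_rightMap_pos {p : ℝ × ℝ} (hp : p ∈ openTriangle) :
    0 < orient p (1, 0) (0, 1) := by
  rw [orient_rightMap]
  linarith [hp.2.2]

theorem leftMap_image_openTriangle {p : ℝ × ℝ} (hp : p ∈ openTriangle) :
    leftMap p '' openTriangle =
      {z ∈ openTriangle | cornerSlope p < cornerSlope z ∧ 0 < orient p (0, 1) z} := by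
  ext z
  obtain ⟨hs0, hs1⟩ := cornerSlope_mem_Ioo hp
  have hs := cornerSlope_mul_one_sub_fst hp
  have ⟨h1, _, h12⟩ := hp
  have hleft : orient (0, cornerSlope p) z (0, 1) = z.1 * (1 - cornerSlope p) := by simp [orient]
  have hbase : orient (0, cornerSlope p) p z = p.1 * (z.2 - cornerSlope p * (1 - z.1)) := by
    simp only [orient]
    linear_combination z.1 * hs
  have hpivot : orient z p (0, 1) = orient p (0, 1) z := by simp only [orient]; ring
  have hline : orient p (0, 1) z = p.1 * (1 - z.2) - (1 - p.2) * z.1 := by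
    simp only [orient]; ring
  rw [leftMap, mem_triangleMap_image_openTriangle_iff (orient_leftMap_pos hp), hleft, hbase,
    hpivot, mul_pos_iff_of_pos_right (sub_pos.2 hs1), mul_pos_iff_of_pos_left h1, Set.mem_sep_iff]
  constructor
  · rintro ⟨hz1, hz2, hz⟩
    have hz12 : z.1 + z.2 < 1 := by rw [hline] at hz; nlinarith
    have hz1' : 0 < 1 - z.1 := by nlinarith
    exact ⟨⟨hz1, by nlinarith, hz12⟩, (lt_div_iff₀ hz1').2 (by linarith), hz⟩
  · rintro ⟨⟨hz1, hz2, hz12⟩, hslope, hz⟩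
    exact ⟨hz1, by linarith [(lt_div_iff₀ (by linarith : 0 < 1 - z.1)).1 hslope], hz⟩

theorem rightMap_image_openTriangle {p : ℝ × ℝ} (hp : p ∈ openTriangle) :
    rightMap p '' openTriangle =
      {z ∈ openTriangle | cornerSlope p < cornerSlope z ∧ orient p (0, 1) z < 0} := by
  ext z
  have hpivot : orient p z (0, 1) = -orient p (0, 1) z := by simp only [orient]; ring
  have hline : orient p (0, 1) z = p.1 * (1 - z.2) - (1 - p.2) * z.1 := by
    simp only [orient]; ring
  rw [rightMap, mem_triangleMap_image_openTriangle_iff (orient_rightMap_pos hp), hpivot,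
    orient_rightMap, Set.mem_sep_iff, neg_pos]
  constructor
  · rintro ⟨hz, hslope, hz12⟩
    have hz1 : 0 < z.1 := by
      rw [hline] at hz
      nlinarith [hp.1, hp.2.2]
    have hz2 : 0 < z.2 := by
      simp only [orient] at hslope
      nlinarith [hp.2.1, hp.2.2]
    have hz' : z ∈ openTriangle := ⟨hz1, hz2, by linarith⟩
    exact ⟨hz', (cornerSlope_lt_iff hp hz').2 hslope, hz⟩
  · rintro ⟨hz', hslope, hz⟩
    exact ⟨hz, (cornerSlope_lt_iff hp hz').1 hslope, by linarith [hz'.2.2]⟩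

theorem two_smul_restrict_triangleMap_image {p q r : ℝ × ℝ} (h : 0 < orient p q r) :
    (2 : ENNReal) • volume.restrict (triangleMap p q r '' openTriangle) =
      (orient p q r).toNNReal • μT.map (triangleMap p q r) := by
  have hdet := det_triangleMap_linear p q r
  rw [restrict_image_affineMap volume (hdet ▸ h.ne'), hdet, abs_of_pos h,
    μT_eq_smul_restrict_openTriangle, Measure.map_smul, smul_comm]
  rfl

theorem restrict_setOf_cornerSlope_lt {p : ℝ × ℝ} (hp : p ∈ openTriangle) :
    μT.restrict {z | cornerSlope p < cornerSlope z} =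
      (p.1 * (1 - cornerSlope p)).toNNReal • μT.map (leftMap p) +
        (1 - p.1 - p.2).toNNReal • μT.map (rightMap p) := by
  have hmeas : MeasurableSet {z | cornerSlope p < cornerSlope z} :=
    measurableSet_lt measurable_const measurable_cornerSlope
  have hne : p ≠ (0, 1) := by
    rintro rfl
    exact lt_irrefl _ hp.1
  have hunion : ({z | cornerSlope p < cornerSlope z} ∩ openTriangle : Set (ℝ × ℝ)) =ᵐ[volume]
      (leftMap p '' openTriangle ∪ rightMap p '' openTriangle : Set (ℝ × ℝ)) := by
    rw [leftMap_image_openTriangle hp, rightMap_image_openTriangle hp]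
    refine Filter.eventuallyEq_set.2 ?_
    filter_upwards [ae_orient_ne_zero hne] with z hz
    simp only [Set.mem_inter_iff, Set.mem_union, Set.mem_ofPred_eq]
    grind
  have hdisj : Disjoint (leftMap p '' openTriangle) (rightMap p '' openTriangle) := by
    rw [leftMap_image_openTriangle hp, rightMap_image_openTriangle hp]
    exact Set.disjoint_left.2 fun z h1 h2 => h1.2.2.asymm h2.2.2
  have hmeas_right : MeasurableSet (rightMap p '' openTriangle) :=
    (measurableEmbedding_affineMap (det_triangleMap_linear p (1, 0) (0, 1) ▸
      (orient_rightMap_pos hp).ne')).measurableSet_image.2 isOpen_openTriangle.measurableSet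
  change _ = _ • μT.map (triangleMap (0, cornerSlope p) p (0, 1)) +
    _ • μT.map (triangleMap p (1, 0) (0, 1))
  rw [← orient_leftMap, ← orient_rightMap,
    ← two_smul_restrict_triangleMap_image (orient_leftMap_pos hp),
    ← two_smul_restrict_triangleMap_image (orient_rightMap_pos hp), ← smul_add,
    ← leftMap, ← rightMap, ← Measure.restrict_union hdisj hmeas_right,
    μT_eq_smul_restrict_openTriangle, Measure.restrict_smul, Measure.restrict_restrict hmeas]
  exact congrArg _ (Measure.restrict_congr_set hunion)

end Splitting

section InsertNth

variable {α : Type*} {m : ℕ}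

theorem image_insertNth_compl_singleton_self (i : Fin (m + 1)) (x : α) (f : Fin m → α) :
    i.insertNth (α := fun _ => α) x f '' {i}ᶜ = Set.range f := by
  ext y
  simp [Fin.exists_iff_succAbove i]

theorem image_insertNth_compl_singleton_succAbove (i : Fin (m + 1)) (x : α) (f : Fin m → α)
    (k : Fin m) :
    i.insertNth (α := fun _ => α) x f '' {i.succAbove k}ᶜ = insert x (f '' {k}ᶜ) := by
  ext y
  simp [Fin.exists_iff_succAbove i, eq_comm]

end InsertNth

section SplitConfiguration

theorem triangleMap_one_zero (p q r : ℝ × ℝ) : triangleMap p q r (1, 0) = q := by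
  simp [triangleMap_apply]

theorem triangleMap_zero_one (p q r : ℝ × ℝ) : triangleMap p q r (0, 1) = r := by
  simp [triangleMap_apply]

theorem triangleMap_image_T (p q r : ℝ × ℝ) :
    triangleMap p q r '' T = convexHull ℝ {p, q, r} := by
  have h0 : triangleMap p q r (0, 0) = p := by simp [triangleMap_apply]
  rw [T, AffineMap.image_convexHull, Set.image_insert_eq, Set.image_pair, h0,
    triangleMap_one_zero, triangleMap_zero_one]

theorem leftMap_inv_fst_zero {p : ℝ × ℝ} (hp : p ∈ openTriangle) :
    leftMap p (p.1⁻¹, 0) = (1, 0) := by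
  have h1 := hp.1.ne'
  have hs := cornerSlope_mul_one_sub_fst hp
  rw [leftMap, triangleMap_apply]
  ext
  · simp [h1]
  · simp only [Prod.snd_add, Prod.smul_snd, Prod.snd_sub, smul_eq_mul]
    field_simp
    linear_combination -hs

/-- The two fixed vertices of the random convex chain. -/
def corners : Set (ℝ × ℝ) := {(1, 0), (0, 1)}

theorem finite_corners : corners.Finite := Set.toFinite {(1, 0), (0, 1)}

theorem corners_subset_T : corners ⊆ T :=
  (Set.subset_insert _ _).trans (subset_convexHull ℝ _)

theorem mem_convexHull_of_forall_nonneg {Q : Set (ℝ × ℝ)} (hQ : corners ⊆ Q) {d w : ℝ × ℝ}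
    (hd : d ∈ convexHull ℝ Q) {α : ℝ} (hα : 0 ≤ α) (h1 : 0 ≤ w.1 - α * d.1)
    (h2 : 0 ≤ w.2 - α * d.2) (hsum : α * (1 - d.1 - d.2) = 1 - w.1 - w.2) :
    w ∈ convexHull ℝ Q := by
  have hmem := (convex_convexHull ℝ Q).sum_mem (t := Finset.univ)
    (w := ![α, w.1 - α * d.1, w.2 - α * d.2]) (z := ![d, (1, 0), (0, 1)])
    (by simp [Fin.forall_fin_succ, hα, sub_nonneg.1 h1, sub_nonneg.1 h2])
    (by simp only [Fin.sum_univ_three, Matrix.cons_val]; linear_combination hsum)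
    (by simpa [Fin.forall_fin_succ, hd] using
      ⟨subset_convexHull ℝ Q (hQ (Or.inl rfl)), subset_convexHull ℝ Q (hQ (Or.inr rfl))⟩)
  convert hmem
  ext <;> simp [Fin.sum_univ_three]

theorem mem_convexHull_of_mem_convexHull_insert {Q : Set (ℝ × ℝ)} (hQT : Q ⊆ T)
    (hQ : corners ⊆ Q) {e w : ℝ × ℝ} (he1 : 0 ≤ e.1) (he2 : 0 ≤ e.2) (he : 1 ≤ e.1 + e.2)
    (hwT : w ∈ T) (hw : w ∈ convexHull ℝ (insert e Q)) : w ∈ convexHull ℝ Q := by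
  rw [convexHull_insert ⟨_, hQ (Or.inl rfl)⟩, convexJoin_singleton_left, Set.mem_iUnion₂] at hw
  obtain ⟨d, hd, τ, σ, hτ, hσ, hτσ, rfl⟩ := hw
  have hdT : d ∈ T := convexHull_min hQT (convex_convexHull ℝ _) hd
  rw [T_eq] at hdT hwT
  obtain ⟨hd1, hd2, hd12⟩ := hdT
  obtain ⟨-, -, hw12⟩ := hwT
  simp only [Prod.fst_add, Prod.snd_add, Prod.smul_fst, Prod.smul_snd, smul_eq_mul] at hw12
  -- the weight of `d` decreases to `α` and the corners absorb the rest of `τ • e + σ • d`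
  obtain ⟨α, hα, hασ, hαd⟩ : ∃ α, 0 ≤ α ∧ α ≤ σ ∧
      α * (1 - d.1 - d.2) = 1 - (τ * e.1 + σ * d.1) - (τ * e.2 + σ * d.2) := by
    have hle : 1 - (τ * e.1 + σ * d.1) - (τ * e.2 + σ * d.2) ≤ σ * (1 - d.1 - d.2) := by
      nlinarith
    rcases (show 0 ≤ 1 - d.1 - d.2 by linarith).eq_or_lt with h0 | hpos
    · exact ⟨0, le_rfl, hσ, by nlinarith⟩
    · exact ⟨_ / (1 - d.1 - d.2), div_nonneg (by linarith) hpos.le, (div_le_iff₀ hpos).2 hle,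
        div_mul_cancel₀ _ hpos.ne'⟩
  refine mem_convexHull_of_forall_nonneg hQ hd hα ?_ ?_ ?_ <;>
    simp only [Prod.fst_add, Prod.snd_add, Prod.smul_fst, Prod.smul_snd, smul_eq_mul]
  · nlinarith
  · nlinarith
  · exact hαd

theorem notMem_convexHull_union_corners {p : ℝ × ℝ} (hp : p ∈ openTriangle) {B : Set (ℝ × ℝ)}
    (hB : ∀ z ∈ B, z ∈ openTriangle ∧ cornerSlope p < cornerSlope z) :
    p ∉ convexHull ℝ (B ∪ corners) := by
  have hne : ((1, 0) : ℝ × ℝ) ≠ p := by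
    rintro rfl
    exact lt_irrefl _ hp.2.1
  rw [corners, Set.union_insert, Set.union_singleton]
  refine notMem_convexHull_insert_of_forall_lt
    ((1 - p.1) • LinearMap.snd ℝ ℝ ℝ + p.2 • LinearMap.fst ℝ ℝ ℝ) (by simp; ring) hne ?_
  rintro z (rfl | hz)
  · simp only [LinearMap.add_apply, LinearMap.smul_apply, LinearMap.fst_apply, LinearMap.snd_apply,
      smul_eq_mul]
    linarith [hp.2.2]
  · have horient := (cornerSlope_lt_iff hp (hB z hz).1).1 (hB z hz).2
    simp only [orient] at horient
    simp only [LinearMap.add_apply, LinearMap.smul_apply, LinearMap.fst_apply, LinearMap.snd_apply,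
      smul_eq_mul]
    linarith

theorem leftMap_mem_convexHull_iff {p : ℝ × ℝ} (hp : p ∈ openTriangle) {A B : Set (ℝ × ℝ)}
    (hA : A ⊆ T) (hB : B ⊆ T) {w : ℝ × ℝ} (hw : w ∈ T) :
    leftMap p w ∈ convexHull ℝ (insert p (leftMap p '' A ∪ rightMap p '' B) ∪ corners) ↔
      w ∈ convexHull ℝ (A ∪ corners) := by
  have hp1 : leftMap p (1, 0) = p := triangleMap_one_zero _ _ _
  have hp2 : leftMap p (0, 1) = (0, 1) := triangleMap_zero_one _ _ _
  have hinj : Function.Injective (leftMap p) := (measurableEmbedding_affineMap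
    (by rw [leftMap, det_triangleMap_linear]; exact (orient_leftMap_pos hp).ne')).injective
  refine ⟨fun h => ?_, fun h => ?_⟩
  · have hp_inv : 1 ≤ p.1⁻¹ := (one_le_inv₀ hp.1).2 (by linarith [hp.2.1, hp.2.2])
    refine mem_convexHull_of_mem_convexHull_insert (e := (p.1⁻¹, 0))
      (Set.union_subset hA corners_subset_T) Set.subset_union_right
      (inv_nonneg.2 hp.1.le) le_rfl (by simpa using hp_inv) hw ?_
    rw [← hinj.mem_set_image, AffineMap.image_convexHull]
    refine convexHull_min ?_ (convex_convexHull ℝ _) h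
    have hvert : {p, (1, 0), (0, 1)} ⊆ leftMap p '' insert (p.1⁻¹, 0) (A ∪ corners) := by
      rintro _ (rfl | rfl | rfl)
      · exact ⟨(1, 0), Or.inr (Or.inr (Or.inl rfl)), hp1⟩
      · exact ⟨_, Or.inl rfl, leftMap_inv_fst_zero hp⟩
      · exact ⟨(0, 1), Or.inr (Or.inr (Or.inr rfl)), hp2⟩
    rintro z ((rfl | ⟨a, ha, rfl⟩ | ⟨b, hb, rfl⟩) | hz)
    · exact subset_convexHull ℝ _ (hvert (Or.inl rfl))
    · exact subset_convexHull ℝ _ ⟨a, Or.inr (Or.inl ha), rfl⟩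
    · refine convexHull_mono hvert ?_
      rw [← triangleMap_image_T]
      exact Set.mem_image_of_mem _ (hB hb)
    · exact subset_convexHull ℝ _ (hvert (Or.inr hz))
  · have himage := Set.mem_image_of_mem (leftMap p) h
    rw [AffineMap.image_convexHull] at himage
    refine convexHull_mono ?_ himage
    rintro _ ⟨a, ha | rfl | rfl, rfl⟩
    · exact Or.inl (Or.inr (Or.inl ⟨a, ha, rfl⟩))
    · exact Or.inl (Or.inl hp1)
    · exact Or.inr (Or.inr hp2)

variable {m : ℕ} {p : ℝ × ℝ} {J : Finset (Fin m)} {ω : Fin m → ℝ × ℝ}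

/-- The configuration whose points with index in `J` lie in the left triangle cut out by `p` and
whose other points lie in the right one, in the positions prescribed by `ω`. -/
def splitPoints (p : ℝ × ℝ) (J : Finset (Fin m)) (ω : Fin m → ℝ × ℝ) (i : Fin m) : ℝ × ℝ :=
  if i ∈ J then leftMap p (ω i) else rightMap p (ω i)

theorem splitPoints_of_mem {i : Fin m} (hi : i ∈ J) : splitPoints p J ω i = leftMap p (ω i) :=
  if_pos hi

theorem splitPoints_of_notMem {i : Fin m} (hi : i ∉ J) :
    splitPoints p J ω i = rightMap p (ω i) :=
  if_neg hi

theorem measurable_splitPoints : Measurable (splitPoints p J) := by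
  refine measurable_pi_lambda _ fun i => ?_
  by_cases hi : i ∈ J
  · simp_rw [splitPoints_of_mem hi]
    exact (measurable_triangleMap _ _ _).comp (measurable_pi_apply i)
  · simp_rw [splitPoints_of_notMem hi]
    exact (measurable_triangleMap _ _ _).comp (measurable_pi_apply i)

theorem splitPoints_image_compl_singleton {k : Fin m} (hk : k ∈ J) :
    splitPoints p J ω '' {k}ᶜ =
      leftMap p '' (J.restrict ω '' {⟨k, hk⟩}ᶜ) ∪ rightMap p '' (ω '' (J : Set (Fin m))ᶜ) := by
  ext z
  constructor
  · rintro ⟨i, hik, rfl⟩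
    by_cases hi : i ∈ J
    · refine Or.inl ⟨ω i, ⟨⟨i, hi⟩, fun h => hik (congrArg Subtype.val h), rfl⟩, ?_⟩
      exact (splitPoints_of_mem hi).symm
    · exact Or.inr ⟨ω i, ⟨i, hi, rfl⟩, (splitPoints_of_notMem hi).symm⟩
  · rintro (⟨_, ⟨i, hik, rfl⟩, rfl⟩ | ⟨_, ⟨i, hi, rfl⟩, rfl⟩)
    · exact ⟨i, fun h => hik (Subtype.ext h), splitPoints_of_mem i.2⟩
    · exact ⟨i, fun h => hi (h ▸ hk), splitPoints_of_notMem hi⟩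

theorem splitPoints_mem_openTriangle (hp : p ∈ openTriangle) (hω : ∀ i, ω i ∈ openTriangle)
    (i : Fin m) :
    splitPoints p J ω i ∈ openTriangle ∧ cornerSlope p < cornerSlope (splitPoints p J ω i) := by
  by_cases hi : i ∈ J
  · have hmem := Set.mem_image_of_mem (leftMap p) (hω i)
    rw [leftMap_image_openTriangle hp] at hmem
    rw [splitPoints_of_mem hi]
    exact ⟨hmem.1, hmem.2.1⟩
  · have hmem := Set.mem_image_of_mem (rightMap p) (hω i)
    rw [rightMap_image_openTriangle hp] at hmem
    rw [splitPoints_of_notMem hi]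
    exact ⟨hmem.1, hmem.2.1⟩

theorem succAbove_mem_extremalIndices_insertNth_splitPoints_iff (hp : p ∈ openTriangle)
    (hω : ∀ i, ω i ∈ openTriangle) (i : Fin (m + 1)) {k : Fin m} (hk : k ∈ J) :
    i.succAbove k ∈ extremalIndices corners
        (i.insertNth (α := fun _ => ℝ × ℝ) p (splitPoints p J ω)) ↔
      ⟨k, hk⟩ ∈ extremalIndices corners (J.restrict ω) := by
  have hωT (S : Set (Fin m)) : ω '' S ⊆ T := by
    rintro _ ⟨i, -, rfl⟩
    exact openTriangle_subset_T (hω i)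
  rw [mem_extremalIndices, mem_extremalIndices, Fin.insertNth_apply_succAbove,
    image_insertNth_compl_singleton_succAbove, splitPoints_image_compl_singleton hk,
    splitPoints_of_mem hk, leftMap_mem_convexHull_iff hp ?_ (hωT _)
    (openTriangle_subset_T (hω k)), Finset.restrict]
  rintro _ ⟨i, -, rfl⟩
  exact openTriangle_subset_T (hω i)

theorem succAbove_notMem_extremalIndices_insertNth_splitPoints
    (hω : ∀ i, ω i ∈ openTriangle) (i : Fin (m + 1)) {k : Fin m} (hk : k ∉ J) :
    i.succAbove k ∉ extremalIndices corners
      (i.insertNth (α := fun _ => ℝ × ℝ) p (splitPoints p J ω)) := by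
  rw [mem_extremalIndices, not_not, Fin.insertNth_apply_succAbove,
    image_insertNth_compl_singleton_succAbove, splitPoints_of_notMem hk]
  have hmem := Set.mem_image_of_mem (rightMap p) (openTriangle_subset_T (hω k))
  rw [rightMap, triangleMap_image_T] at hmem
  have hsub : insert p corners ⊆ insert p (splitPoints p J ω '' {k}ᶜ) ∪ corners :=
    Set.insert_subset (Or.inl (Or.inl rfl)) Set.subset_union_right
  exact convexHull_mono hsub hmem

theorem card_extremalIndices_insertNth_splitPoints (hp : p ∈ openTriangle)
    (hω : ∀ i, ω i ∈ openTriangle) (i : Fin (m + 1)) :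
    (extremalIndices corners
        (i.insertNth (α := fun _ => ℝ × ℝ) p (splitPoints p J ω))).card =
      (extremalIndices corners (J.restrict ω)).card + 1 := by
  classical
  have hpivot : i ∈ extremalIndices corners
      (i.insertNth (α := fun _ => ℝ × ℝ) p (splitPoints p J ω)) := by
    rw [mem_extremalIndices, image_insertNth_compl_singleton_self, Fin.insertNth_apply_same]
    refine notMem_convexHull_union_corners hp ?_
    rintro _ ⟨k, rfl⟩
    exact splitPoints_mem_openTriangle hp hω k
  have hrest : extremalIndices corners
      (i.insertNth (α := fun _ => ℝ × ℝ) p (splitPoints p J ω)) =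
      insert i ((extremalIndices corners (J.restrict ω)).map
        ((Function.Embedding.subtype _).trans i.succAboveEmb)) := by
    ext k
    cases k using Fin.succAboveCases i with
    | x => simp [hpivot]
    | p k =>
      by_cases hk : k ∈ J
      · simp [succAbove_mem_extremalIndices_insertNth_splitPoints_iff hp hω i hk, hk]
      · simp [succAbove_notMem_extremalIndices_insertNth_splitPoints hω i hk, hk]
  rw [hrest, Finset.card_insert_of_notMem (by simp), Finset.card_map]

end SplitConfiguration

section MinimalKey

variable {β : Type*} [LinearOrder β] {m : ℕ}

theorem existsUnique_forall_lt_succAbove {f : Fin (m + 1) → β} (hf : Function.Injective f) :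
    ∃! i, ∀ k, f i < f (i.succAbove k) := by
  obtain ⟨i, hi⟩ := Finite.exists_min f
  refine ⟨i, fun k => (hi _).lt_of_ne (hf.ne (Fin.succAbove_ne i k).symm), fun j hj => ?_⟩
  by_contra hji
  obtain ⟨k, rfl⟩ := Fin.exists_succAbove_eq (Ne.symm hji)
  exact (hi j).not_gt (hj k)

variable {α : Type*} [MeasurableSpace α]

theorem measurable_insertNth (i : Fin (m + 1)) (x : α) :
    Measurable fun η : Fin m → α => i.insertNth (α := fun _ => α) x η :=
  (MeasurableEquiv.piFinSuccAbove (fun _ => α) i).symm.measurable.comp measurable_prodMk_left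

variable (μ : Measure α) [IsProbabilityMeasure μ]
  [TopologicalSpace β] [OrderClosedTopology β] [SecondCountableTopology β] [MeasurableSpace β]
  [BorelSpace β] {s : α → β}

theorem lintegral_pi_fin_succ_eq_sum_setLIntegral_lt (hs : Measurable s)
    (hne : ∀ᵐ x ∂μ, ∀ᵐ y ∂μ, s x ≠ s y) {F : (Fin (m + 1) → α) → ENNReal} (hF : Measurable F) :
    ∫⁻ ω, F ω ∂Measure.pi (fun _ => μ) =
      ∑ i, ∫⁻ x, (∫⁻ η in Set.univ.pi fun _ => {z | s x < s z},
        F (Fin.insertNth (α := fun _ => α) i x η) ∂Measure.pi fun _ => μ) ∂μ := by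
  let E (i : Fin (m + 1)) : Set (Fin (m + 1) → α) := {ω | ∀ k, s (ω i) < s (ω (i.succAbove k))}
  have hE (i : Fin (m + 1)) : MeasurableSet (E i) := by
    simp only [E, Set.ofPred_forall]
    exact .iInter fun k => measurableSet_lt (by fun_prop) (by fun_prop)
  have hdecomp : ∀ᵐ ω ∂Measure.pi fun _ => μ, F ω = ∑ i, (E i).indicator F ω := by
    have hmeas : MeasurableSet {p : α × α | s p.1 ≠ s p.2} :=
      (measurableSet_eq_fun (by fun_prop) (by fun_prop)).compl
    filter_upwards [ae_pi_pairwise hmeas hne] with ω hω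
    obtain ⟨i, hi, hi_unique⟩ :=
      existsUnique_forall_lt_succAbove (Function.injective_iff_pairwise_ne.2 hω)
    have hzero (j : Fin (m + 1)) (hji : j ≠ i) : (E j).indicator F ω = 0 :=
      Set.indicator_of_notMem (fun hj : ω ∈ E j => hji (hi_unique j hj)) F
    have hi : ω ∈ E i := hi
    rw [Fintype.sum_eq_single i hzero, Set.indicator_of_mem hi]
  rw [lintegral_congr_ae hdecomp, lintegral_finsetSum _ fun i _ => hF.indicator (hE i)]
  refine Finset.sum_congr rfl fun i _ => ?_
  have hpres := (measurePreserving_piFinSuccAbove (fun _ => μ) i).symm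
  rw [← hpres.lintegral_comp (hF.indicator (hE i)),
    lintegral_prod _ ((hF.indicator (hE i)).fun_comp hpres.measurable).aemeasurable]
  refine lintegral_congr fun x => ?_
  rw [← lintegral_indicator (.univ_pi fun _ => measurableSet_lt measurable_const hs)]
  refine lintegral_congr fun η => ?_
  simp only [Set.indicator]
  congr 1
  simp [E, MeasurableEquiv.piFinSuccAbove_symm_apply, Fin.insertNthEquiv]

end MinimalKey

section AreaIntegrals

open scoped Nat

theorem intervalIntegral_pow_mul_one_sub_pow (a b : ℕ) :
    ∫ x in (0 : ℝ)..1, x ^ a * (1 - x) ^ b = a ! * b ! / (a + b + 1)! := by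
  have hbeta := Complex.Gamma_mul_Gamma_eq_betaIntegral (s := a + 1) (t := b + 1)
    (by simpa using Nat.cast_add_one_pos a) (by simpa using Nat.cast_add_one_pos b)
  have hsum : (a + 1 + (b + 1) : ℂ) = (a + b + 1 : ℕ) + 1 := by
    push_cast
    ring
  simp only [hsum, Complex.betaIntegral, add_sub_cancel_right, Complex.cpow_natCast,
    Complex.Gamma_nat_eq_factorial] at hbeta
  rw [eq_div_iff (Nat.cast_ne_zero.2 (Nat.factorial_ne_zero _)), mul_comm]
  apply Complex.ofReal_injective
  rw [Complex.ofReal_mul, ← intervalIntegral.integral_ofReal]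
  push_cast
  exact hbeta.symm

theorem setLIntegral_area_pow_mul_area_pow (i j : ℕ) {x : ℝ} (hx : x ∈ Set.Ioo 0 1) :
    ∫⁻ y in Set.Ioo 0 (1 - x),
        ENNReal.ofReal (x * (1 - cornerSlope (x, y))) ^ i * ENNReal.ofReal (1 - x - y) ^ j =
      ENNReal.ofReal (1 / (i + j + 1) * (x ^ i * (1 - x) ^ (j + 1))) := by
  obtain ⟨hx0, hx1⟩ := hx
  have hx1 : 0 < 1 - x := sub_pos.2 hx1
  have hintegrand : ∀ y ∈ Set.Ioo 0 (1 - x),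
      ENNReal.ofReal (x * (1 - cornerSlope (x, y))) ^ i * ENNReal.ofReal (1 - x - y) ^ j =
        ENNReal.ofReal ((x / (1 - x)) ^ i * (1 - x - y) ^ (i + j)) := by
    intro y hy
    have hy : 0 < 1 - x - y := sub_pos.2 hy.2
    have harea : x * (1 - cornerSlope (x, y)) = x / (1 - x) * (1 - x - y) := by
      simp only [cornerSlope]
      field_simp
    rw [harea, ← ENNReal.ofReal_pow (by positivity), ← ENNReal.ofReal_pow hy.le,
      ← ENNReal.ofReal_mul (by positivity), mul_pow, mul_assoc, ← pow_add]
  rw [setLIntegral_congr_fun measurableSet_Ioo hintegrand,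
    setLIntegral_Ioo_ofReal_eq_intervalIntegral hx1.le (by fun_prop) fun y hy =>
      mul_nonneg (by positivity) (pow_nonneg (sub_pos.2 hy.2).le _),
    intervalIntegral.integral_const_mul,
    intervalIntegral.integral_comp_sub_left (fun u => u ^ (i + j)), sub_self, sub_zero,
    integral_pow, zero_pow (Nat.succ_ne_zero _), sub_zero, div_pow, add_assoc i, pow_add]
  congr 1
  push_cast
  field_simp

theorem lintegral_μT_area_pow_mul_area_pow (i j : ℕ) :
    ∫⁻ p, ENNReal.ofReal (p.1 * (1 - cornerSlope p)) ^ i * ENNReal.ofReal (1 - p.1 - p.2) ^ j ∂μT =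
      ENNReal.ofReal (2 / (i + j + 1) * (i ! * (j + 1)! / (i + j + 2)!)) := by
  have := measurable_cornerSlope
  rw [lintegral_μT (by fun_prop), setLIntegral_congr_fun measurableSet_Ioo fun x hx =>
      setLIntegral_area_pow_mul_area_pow i j hx,
    setLIntegral_Ioo_ofReal_eq_intervalIntegral zero_le_one (by fun_prop) fun x hx =>
      mul_nonneg (by positivity)
        (mul_nonneg (pow_nonneg hx.1.le _) (pow_nonneg (sub_pos.2 hx.2).le _)),
    intervalIntegral.integral_const_mul, intervalIntegral_pow_mul_one_sub_pow,
    ← ENNReal.ofReal_ofNat, ← ENNReal.ofReal_mul zero_le_two, ← add_assoc i j 1]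
  congr 1
  ring

theorem succ_mul_choose_mul_area_moment (i j : ℕ) :
    (i + j + 1 : ℝ) *
        ((i + j).choose i * (2 / (i + j + 1) * (i ! * (j + 1)! / (i + j + 2)!))) =
      2 * (j + 1) / ((i + j + 1) * (i + j + 2)) := by
  rw [Nat.cast_add_choose, Nat.factorial_succ j, Nat.factorial_succ (i + j + 1),
    Nat.factorial_succ (i + j)]
  push_cast
  have := Nat.factorial_ne_zero
  field_simp
  ring

end AreaIntegrals

section VertexRecursion

variable {m : ℕ}

theorem setLIntegral_card_extremalIndices_insertNth {p : ℝ × ℝ} (hp : p ∈ openTriangle)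
    (i : Fin (m + 1)) (f : ℕ → ENNReal) :
    ∫⁻ η in Set.univ.pi fun _ => {z | cornerSlope p < cornerSlope z},
        f (extremalIndices corners (i.insertNth (α := fun _ => ℝ × ℝ) p η)).card
          ∂Measure.pi (fun _ => μT) =
      ∑ a ∈ Finset.HasAntidiagonal.antidiagonal m, m.choose a.1 *
        (ENNReal.ofReal (p.1 * (1 - cornerSlope p)) ^ a.1 *
          ENNReal.ofReal (1 - p.1 - p.2) ^ a.2) *
        ∫⁻ k, f (k + 1) ∂extremalCountLaw corners μT a.1 := by
  have hcard {ι : Type} [Fintype ι] : Measurable fun ω : ι → ℝ × ℝ =>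
      (extremalIndices corners ω).card := measurable_card_extremalIndices finite_corners
  have hsplit (J : Finset (Fin m)) : Measurable (splitPoints p J) := measurable_splitPoints
  have hpiece (J : Finset (Fin m)) :
      ∫⁻ η, f (extremalIndices corners (i.insertNth (α := fun _ => ℝ × ℝ) p η)).card
        ∂(Measure.pi fun _ => μT).map (splitPoints p J) =
      ∫⁻ k, f (k + 1) ∂extremalCountLaw corners μT J.card := by
    have hf : Measurable fun η =>
        f (extremalIndices corners (i.insertNth (α := fun _ => ℝ × ℝ) p η)).card :=
      measurable_from_top.comp (hcard.comp (measurable_insertNth i p))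
    rw [← map_card_extremalIndices_restrict μT finite_corners, lintegral_map hf (hsplit J),
      lintegral_map measurable_from_top (hcard.fun_comp J.measurable_restrict)]
    refine lintegral_congr_ae ?_
    filter_upwards [ae_pi_forall ae_mem_openTriangle] with ω hω
    rw [card_extremalIndices_insertNth_splitPoints hp hω]
  rw [Measure.restrict_pi_pi]
  simp_rw [restrict_setOf_cornerSlope_lt hp]
  rw [pi_smul_map_add_smul_map μT (φ := leftMap p) (ψ := rightMap p) (measurable_triangleMap _ _ _)
      (measurable_triangleMap _ _ _), lintegral_finsetSum_measure,
    Finset.Nat.sum_antidiagonal_eq_sum_range_succ_mk]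
  simp_rw [lintegral_smul_measure]
  have hterm (J : Finset (Fin m)) :=
    congrArg (((p.1 * (1 - cornerSlope p)).toNNReal ^ J.card *
      (1 - p.1 - p.2).toNNReal ^ (Fintype.card (Fin m) - J.card)) • ·) (hpiece J)
  refine (Finset.sum_congr rfl fun J _ => hterm J).trans ?_
  rw [← Finset.powerset_univ, Finset.sum_powerset_apply_card (fun a =>
    ((p.1 * (1 - cornerSlope p)).toNNReal ^ a * (1 - p.1 - p.2).toNNReal ^
      (Fintype.card (Fin m) - a)) • ∫⁻ k, f (k + 1) ∂extremalCountLaw corners μT a)]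
  simp only [Finset.card_univ, Fintype.card_fin, nsmul_eq_mul, ENNReal.smul_def, smul_eq_mul,
    ENNReal.coe_mul, ENNReal.coe_pow, ENNReal.ofReal, mul_assoc]

theorem lintegral_extremalCountLaw_succ (f : ℕ → ENNReal) :
    ∫⁻ k, f k ∂extremalCountLaw corners μT (m + 1) =
      ∑ a ∈ Finset.HasAntidiagonal.antidiagonal m,
        ENNReal.ofReal (2 * (a.2 + 1) / ((m + 1) * (m + 2))) *
          ∫⁻ k, f (k + 1) ∂extremalCountLaw corners μT a.1 := by
  have hcard : Measurable fun ω : Fin (m + 1) → ℝ × ℝ =>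
      (extremalIndices corners ω).card := measurable_card_extremalIndices finite_corners
  have hslope := measurable_cornerSlope
  have hcond (i : Fin (m + 1)) :=
    lintegral_congr_ae (ae_mem_openTriangle.mono fun p hp =>
      setLIntegral_card_extremalIndices_insertNth hp i f)
  rw [extremalCountLaw, lintegral_map measurable_from_top hcard,
    lintegral_pi_fin_succ_eq_sum_setLIntegral_lt μT measurable_cornerSlope
      (ae_mem_openTriangle.mono fun p hp => ae_cornerSlope_ne hp)
      (measurable_from_top.fun_comp hcard)]
  rw [Finset.sum_congr rfl fun i _ => hcond i, Finset.sum_const, Finset.card_univ,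
    Fintype.card_fin, lintegral_finsetSum _ fun a _ => by fun_prop, Finset.smul_sum]
  refine Finset.sum_congr rfl fun ⟨i, j⟩ ha => ?_
  obtain rfl : i + j = m := Finset.HasAntidiagonal.mem_antidiagonal.1 ha
  rw [lintegral_mul_const _ (by fun_prop), lintegral_const_mul _ (by fun_prop),
    lintegral_μT_area_pow_mul_area_pow, nsmul_eq_mul, ← mul_assoc]
  congr 1
  push_cast
  rw [← succ_mul_choose_mul_area_moment i j, ENNReal.ofReal_mul (p := (i + j + 1 : ℝ))
    (by positivity), ENNReal.ofReal_mul (p := ((i + j).choose i : ℝ)) (by positivity),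
    ENNReal.ofReal_natCast, ← ENNReal.ofReal_natCast i, ← ENNReal.ofReal_natCast j,
    ← ENNReal.ofReal_one, ← ENNReal.ofReal_add, ← ENNReal.ofReal_add] <;> positivity

end VertexRecursion

section DiagonalSums

theorem integrable_extremalCountLaw {E : Type*} [AddCommGroup E] [Module ℝ E] [MeasurableSpace E]
    [TopologicalSpace E] [T2Space E] [IsTopologicalAddGroup E] [ContinuousSMul ℝ E]
    [BorelSpace E] [SecondCountableTopology E] {C : Set E} (μ : Measure E) [IsProbabilityMeasure μ]
    (hC : C.Finite) (n : ℕ) (f : ℕ → ℝ) : Integrable f (extremalCountLaw C μ n) := by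
  have := isProbabilityMeasure_extremalCountLaw μ hC n
  refine .of_bound measurable_from_top.aestronglyMeasurable
    (∑ k ∈ Finset.range (n + 1), ‖f k‖) ?_
  filter_upwards [ae_extremalCountLaw_le μ hC n] with k hk
  exact Finset.single_le_sum (f := fun k => ‖f k‖) (fun _ _ => norm_nonneg _)
    (Finset.mem_range_succ_iff.2 hk)

theorem extremalCountLaw_succ (m : ℕ) :
    extremalCountLaw corners μT (m + 1) =
      ∑ a ∈ Finset.HasAntidiagonal.antidiagonal m,
        ENNReal.ofReal (2 * (a.2 + 1) / ((m + 1) * (m + 2))) •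
          (extremalCountLaw corners μT a.1).map (· + 1) := by
  refine Measure.ext_of_lintegral _ fun f hf => ?_
  rw [lintegral_extremalCountLaw_succ, lintegral_finsetSum_measure]
  simp only [lintegral_smul_measure, smul_eq_mul, lintegral_map hf measurable_from_top]

theorem integral_extremalCountLaw_succ (m : ℕ) (f : ℕ → ℝ) :
    ∫ k, f k ∂extremalCountLaw corners μT (m + 1) =
      ∑ a ∈ Finset.HasAntidiagonal.antidiagonal m,
        2 * (a.2 + 1) / ((m + 1) * (m + 2)) *
          ∫ k, f (k + 1) ∂extremalCountLaw corners μT a.1 := by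
  have hf : Measurable f := measurable_from_top
  have hint (n : ℕ) : Integrable f ((extremalCountLaw corners μT n).map (· + 1)) :=
    (integrable_map_measure hf.aestronglyMeasurable measurable_from_top.aemeasurable).2
      (integrable_extremalCountLaw μT finite_corners n _)
  rw [extremalCountLaw_succ,
    integral_finsetSum_measure fun a _ => (hint a.1).smul_measure ENNReal.ofReal_ne_top]
  refine Finset.sum_congr rfl fun a _ => ?_
  rw [integral_smul_measure, ENNReal.toReal_ofReal (by positivity),
    integral_map measurable_from_top.aemeasurable hf.aestronglyMeasurable, smul_eq_mul]

theorem integral_pow_mul_pow_extremalCountLaw_succ (m : ℕ) (x s : ℝ) :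
    (m + 1) * (m + 2) * ∫ k, x ^ k * s ^ (m + 1 - k) ∂extremalCountLaw corners μT (m + 1) =
      2 * x * ∑ a ∈ Finset.HasAntidiagonal.antidiagonal m,
        (∫ k, x ^ k * s ^ (a.1 - k) ∂extremalCountLaw corners μT a.1) * ((a.2 + 1) * s ^ a.2) := by
  rw [integral_extremalCountLaw_succ, Finset.mul_sum, Finset.mul_sum]
  refine Finset.sum_congr rfl fun ⟨i, j⟩ ha => ?_
  obtain rfl : i + j = m := Finset.HasAntidiagonal.mem_antidiagonal.1 ha
  have hshift : ∫ k, x ^ (k + 1) * s ^ (i + j + 1 - (k + 1)) ∂extremalCountLaw corners μT i =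
      x * s ^ j * ∫ k, x ^ k * s ^ (i - k) ∂extremalCountLaw corners μT i := by
    rw [← integral_const_mul]
    refine integral_congr_ae ?_
    filter_upwards [ae_extremalCountLaw_le μT finite_corners i] with k hk
    rw [Nat.add_sub_add_right, Nat.sub_add_comm hk]
    ring
  rw [hshift]
  field_simp

end DiagonalSums

section ChainStatistics

theorem corners_subset_extremePoints_T : corners ⊆ T.extremePoints ℝ := by
  rintro _ (rfl | rfl)
  · rw [T, mem_extremePoints_convexHull_iff_notMem (by simp)]
    have hsub : ({(0, 0), (1, 0), (0, 1)} \ {(1, 0)} : Set (ℝ × ℝ)) ⊆ {z | z.1 ≤ 0} := by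
      rintro z ⟨rfl | rfl | rfl, hz⟩ <;> simp_all
    intro h
    exact (one_pos (α := ℝ)).not_ge
      (convexHull_min hsub (convex_halfSpace_le (LinearMap.fst ℝ ℝ ℝ).isLinear 0) h)
  · rw [T, mem_extremePoints_convexHull_iff_notMem (by simp)]
    have hsub : ({(0, 0), (1, 0), (0, 1)} \ {(0, 1)} : Set (ℝ × ℝ)) ⊆ {z | z.2 ≤ 0} := by
      rintro z ⟨rfl | rfl | rfl, hz⟩ <;> simp_all
    intro h
    exact (one_pos (α := ℝ)).not_ge
      (convexHull_min hsub (convex_halfSpace_le (LinearMap.snd ℝ ℝ ℝ).isLinear 0) h)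

theorem disjoint_openTriangle_corners : Disjoint openTriangle corners := by
  rw [Set.disjoint_right]
  rintro _ (rfl | rfl) ⟨h₁, h₂, -⟩
  exacts [lt_irrefl _ h₂, lt_irrefl _ h₁]

variable {n : ℕ} {ω : Fin n → ℝ × ℝ}

theorem Tchain_subset_T (hω : ∀ i, ω i ∈ openTriangle) : Tchain n ω ⊆ T :=
  convexHull_min (Set.union_subset
    (Set.range_subset_iff.2 fun i => openTriangle_subset_T (hω i)) corners_subset_T)
    (convex_convexHull ℝ _)

theorem V_eq_measureReal (hω : ∀ i, ω i ∈ openTriangle) :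
    V n ω = μT.real (convexHull ℝ (Set.range ω ∪ corners)) := by
  change V n ω = (μT (Tchain n ω)).toReal
  rw [V, μT, Measure.smul_apply, Measure.restrict_eq_self _ (Tchain_subset_T hω), smul_eq_mul,
    ENNReal.toReal_mul, ENNReal.toReal_ofNat]

theorem N_eq_card_extremalIndices (hω : ∀ i, ω i ∈ openTriangle) (hinj : Function.Injective ω) :
    N n ω = (extremalIndices corners ω).card := by
  have hT := Tchain_subset_T hω
  have hcorners : corners ⊆ (Tchain n ω).extremePoints ℝ := fun z hz =>
    inter_extremePoints_subset_extremePoints_of_subset hT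
      ⟨subset_convexHull ℝ _ (.inr hz), corners_subset_extremePoints_T hz⟩
  have hdisj : Disjoint (Set.range ω) corners :=
    disjoint_openTriangle_corners.mono_left (Set.range_subset_iff.2 hω)
  have hcard : corners.ncard = 2 := Set.ncard_pair (by simp)
  change (Set.extremePoints ℝ (convexHull ℝ (Set.range ω ∪ corners))).ncard - 2 = _
  rw [ncard_extremePoints_convexHull_range_union hinj hdisj finite_corners hcorners, hcard,
    Nat.add_sub_cancel]

theorem integral_V_pow (n k : ℕ) :
    ∫ ω, V n ω ^ k ∂P n =
      ∫ ω, μT.real (convexHull ℝ (Set.range ω ∪ corners)) ^ k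
        ∂Measure.pi fun _ : Fin n => μT := by
  refine integral_congr_ae ?_
  filter_upwards [ae_pi_forall ae_mem_openTriangle] with ω hω
  rw [V_eq_measureReal hω]

theorem G_eq_integral_extremalCountLaw (n : ℕ) (t : ℝ) :
    G n t = ∫ k, t ^ k ∂extremalCountLaw corners μT n := by
  rw [G, extremalCountLaw, integral_map
    (measurable_card_extremalIndices finite_corners).aemeasurable (by fun_prop)]
  refine integral_congr_ae ?_
  filter_upwards [ae_pi_forall ae_mem_openTriangle, ae_pi_injective μT] with ω hω hinj
  rw [N_eq_card_extremalIndices hω hinj]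

theorem abs_q_le (n k : ℕ) : |q n k| ≤ (n + k).choose k := by
  have hV : ‖∫ ω, V n ω ^ k ∂P n‖ ≤ 1 := by
    rw [integral_V_pow]
    refine (norm_integral_le_of_norm_le_const (.of_forall fun ω => ?_)).trans_eq
      (by rw [probReal_univ, one_mul])
    rw [norm_pow, Real.norm_of_nonneg measureReal_nonneg]
    exact pow_le_one₀ measureReal_nonneg measureReal_le_one
  rw [q, abs_mul, Nat.abs_cast]
  exact mul_le_of_le_one_right (Nat.cast_nonneg _) hV

theorem sum_antidiagonal_q (l : ℕ) (x y : ℝ) :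
    ∑ p ∈ Finset.HasAntidiagonal.antidiagonal l, q p.1 p.2 * x ^ p.1 * y ^ p.2 =
      ∫ k, x ^ k * (x + y) ^ (l - k) ∂extremalCountLaw corners μT l := by
  rw [← sum_choose_mul_integral_measureReal_convexHull_pow μT finite_corners]
  refine Finset.sum_congr rfl fun p hp => ?_
  rw [q, integral_V_pow, ← Nat.choose_symm_add, Finset.HasAntidiagonal.mem_antidiagonal.1 hp]

theorem integral_pow_mul_pow_extremalCountLaw (l : ℕ) (x : ℝ) {s : ℝ} (hs : s ≠ 0) :
    ∫ k, x ^ k * s ^ (l - k) ∂extremalCountLaw corners μT l = s ^ l * G l (x / s) := by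
  rw [G_eq_integral_extremalCountLaw, ← integral_const_mul]
  refine integral_congr_ae ?_
  filter_upwards [ae_extremalCountLaw_le μT finite_corners l] with k hk
  rw [pow_sub₀ s hs hk, div_pow]
  field_simp

end ChainStatistics

section DoubleSeries

theorem sum_antidiagonal_choose_mul_pow_mul_pow {R : Type*} [CommSemiring R] (x y : R) (l : ℕ) :
    ∑ p ∈ Finset.HasAntidiagonal.antidiagonal l, ((p.1 + p.2).choose p.2 : R) * x ^ p.1 * y ^ p.2 =
      (x + y) ^ l := by
  rw [(Commute.all x y).add_pow']
  refine Finset.sum_congr rfl fun p hp => ?_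
  rw [← Finset.HasAntidiagonal.mem_antidiagonal.1 hp, nsmul_eq_mul, Nat.choose_symm_add, mul_assoc]

theorem hasSum_sum_antidiagonal {M A : Type*} [AddCommMonoid M] [TopologicalSpace M]
    [ContinuousAdd M] [RegularSpace M] [AddCommMonoid A] [Finset.HasAntidiagonal A]
    {f : A × A → M} {a : M} (hf : HasSum f a) :
    HasSum (fun l => ∑ p ∈ Finset.HasAntidiagonal.antidiagonal l, f p) a := by
  refine (Finset.HasAntidiagonal.sigmaAntidiagonalEquivProd.hasSum_iff.2 hf).sigma fun l => ?_
  rw [← Finset.sum_coe_sort]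
  exact hasSum_fintype _

theorem summable_choose_mul_pow_mul_pow {w : ℕ → ℝ} (hw : ∀ l, 0 ≤ w l) {x y : ℝ} (hx : 0 ≤ x)
    (hy : 0 ≤ y) (hs : Summable fun l => w l * (x + y) ^ l) :
    Summable fun p : ℕ × ℕ => w (p.1 + p.2) * ((p.1 + p.2).choose p.2 * x ^ p.1 * y ^ p.2) := by
  rw [← Finset.HasAntidiagonal.sigmaAntidiagonalEquivProd.summable_iff]
  refine (summable_sigma_of_nonneg fun p => mul_nonneg (hw _) (by positivity)).2
    ⟨fun l => (hasSum_fintype _).summable, hs.congr fun l => ?_⟩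
  rw [tsum_fintype, ← sum_antidiagonal_choose_mul_pow_mul_pow, Finset.mul_sum,
    ← Finset.sum_coe_sort]
  refine Finset.sum_congr rfl fun p _ => ?_
  have hp := Finset.HasAntidiagonal.mem_antidiagonal.1 p.2
  simp only [Finset.HasAntidiagonal.sigmaAntidiagonalEquivProd_apply, hp]

theorem summable_mul_of_abs_le_choose {a : ℕ → ℕ → ℝ} (ha : ∀ n k, |a n k| ≤ (n + k).choose k)
    {w : ℕ → ℝ} (hw : ∀ l, 0 ≤ w l) {x y : ℝ} (hs : Summable fun l => w l * (|x| + |y|) ^ l) :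
    Summable fun p : ℕ × ℕ => w (p.1 + p.2) * (a p.1 p.2 * x ^ p.1 * y ^ p.2) := by
  refine .of_norm_bounded
    (summable_choose_mul_pow_mul_pow hw (abs_nonneg x) (abs_nonneg y) hs) fun p => ?_
  simp only [norm_mul, norm_pow, Real.norm_eq_abs, abs_of_nonneg (hw _)]
  gcongr
  exacts [hw _, ha _ _]

theorem tsum_mul_add_one_mul_of_sum_antidiagonal {𝕜 : Type*} [RCLike 𝕜] {d : ℕ → 𝕜} {c s : 𝕜}
    (hs : ‖s‖ < 1) (hd : Summable d) (hd' : Summable fun l : ℕ => l * (l + 1) * d l)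
    (hrec : ∀ m : ℕ, (m + 1) * (m + 2) * d (m + 1) =
      c * ∑ p ∈ Finset.HasAntidiagonal.antidiagonal m, d p.1 * ((p.2 + 1) * s ^ p.2)) :
    ∑' l : ℕ, l * (l + 1) * d l = c / (1 - s) ^ 2 * ∑' l, d l := by
  have hgeom := tsum_choose_mul_geometric_of_norm_lt_one 1 hs
  have hgeom_summable := summable_choose_mul_geometric_of_norm_lt_one 1 hs
  simp only [Nat.choose_one_right, Nat.cast_add_one, Nat.reduceAdd] at hgeom hgeom_summable
  calc ∑' l : ℕ, l * (l + 1) * d l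
      = ∑' m : ℕ, (m + 1) * (m + 2) * d (m + 1) := by
        rw [hd'.tsum_eq_zero_add]
        push_cast
        simp [add_assoc, one_add_one_eq_two]
    _ = c * ∑' m, ∑ p ∈ Finset.HasAntidiagonal.antidiagonal m,
          d p.1 * ((p.2 + 1) * s ^ p.2) := by
        rw [tsum_congr hrec, tsum_mul_left]
    _ = c * ((∑' l, d l) * ∑' l : ℕ, (l + 1) * s ^ l) := by
        rw [tsum_mul_tsum_eq_tsum_sum_antidiagonal_of_summable_norm hd.norm hgeom_summable.norm]
    _ = c / (1 - s) ^ 2 * ∑' l, d l := by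
        rw [hgeom]
        ring

theorem hasSum_mul_integral_extremalCountLaw {w : ℕ → ℝ} (hw : ∀ l, 0 ≤ w l) {x y : ℝ}
    (hs : Summable fun l => w l * (|x| + |y|) ^ l) :
    HasSum (fun l => w l * ∫ k, x ^ k * (x + y) ^ (l - k) ∂extremalCountLaw corners μT l)
      (∑' p : ℕ × ℕ, w (p.1 + p.2) * (q p.1 p.2 * x ^ p.1 * y ^ p.2)) := by
  convert hasSum_sum_antidiagonal (summable_mul_of_abs_le_choose abs_q_le hw hs).hasSum using 2
    with l
  rw [← sum_antidiagonal_q, Finset.mul_sum]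
  refine Finset.sum_congr rfl fun p hp => ?_
  rw [Finset.HasAntidiagonal.mem_antidiagonal.1 hp]

end DoubleSeries

/-- for `|x| + |y| < 1`, `x + y ≠ 0`, the series
`Σ (n+k)(n+k+1) q_{n,k} x^n y^k` converges absolutely, equals
`Σ_ℓ ℓ(ℓ+1)(x+y)^ℓ G_ℓ(x/(x+y))`, and equals `2x/(1-x-y)^2 · Q(x,y)`. -/
theorem stmt4 (x y : ℝ) (h : |x| + |y| < 1) (hxy : x + y ≠ 0) :
    Summable (fun p : ℕ × ℕ =>
      |((p.1 : ℝ) + p.2) * ((p.1 : ℝ) + p.2 + 1) * q p.1 p.2 * x ^ p.1 * y ^ p.2|) ∧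
    (∑' p : ℕ × ℕ, ((p.1 : ℝ) + p.2) * ((p.1 : ℝ) + p.2 + 1) * q p.1 p.2 * x ^ p.1 * y ^ p.2
      = ∑' l : ℕ, (l : ℝ) * ((l : ℝ) + 1) * (x + y) ^ l * G l (x / (x + y))) ∧
    (∑' p : ℕ × ℕ, ((p.1 : ℝ) + p.2) * ((p.1 : ℝ) + p.2 + 1) * q p.1 p.2 * x ^ p.1 * y ^ p.2
      = 2 * x / (1 - x - y) ^ 2 * ∑' p : ℕ × ℕ, q p.1 p.2 * x ^ p.1 * y ^ p.2) := by
  have hterm (p : ℕ × ℕ) :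
      ((p.1 : ℝ) + p.2) * ((p.1 : ℝ) + p.2 + 1) * q p.1 p.2 * x ^ p.1 * y ^ p.2 =
        ((p.1 + p.2 : ℕ) : ℝ) * ((p.1 + p.2 : ℕ) + 1) * (q p.1 p.2 * x ^ p.1 * y ^ p.2) := by
    push_cast
    ring
  have hr : ‖|x| + |y|‖ < 1 := by rwa [Real.norm_of_nonneg (by positivity)]
  have hw (l : ℕ) : (0 : ℝ) ≤ l * (l + 1) := by positivity
  have hquad : Summable fun l : ℕ => (l * (l + 1) : ℝ) * (|x| + |y|) ^ l :=
    ((summable_pow_mul_geometric_of_norm_lt_one 2 hr).add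
      (summable_pow_mul_geometric_of_norm_lt_one 1 hr)).congr fun l => by ring
  have hgeom : Summable fun l : ℕ => 1 * (|x| + |y|) ^ l :=
    (summable_geometric_of_norm_lt_one hr).mul_left 1
  have hsum := hasSum_mul_integral_extremalCountLaw (fun _ => zero_le_one) hgeom
  have hsum_quad := hasSum_mul_integral_extremalCountLaw hw hquad
  simp only [one_mul] at hsum
  simp only [hterm]
  refine ⟨(summable_mul_of_abs_le_choose abs_q_le hw hquad).abs, ?_, ?_⟩
  · rw [← hsum_quad.tsum_eq]
    refine tsum_congr fun l => ?_
    rw [integral_pow_mul_pow_extremalCountLaw l x hxy, mul_assoc _ ((x + y) ^ l)]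
  · rw [← hsum_quad.tsum_eq, ← hsum.tsum_eq, sub_sub]
    exact tsum_mul_add_one_mul_of_sum_antidiagonal ((abs_add_le x y).trans_lt h) hsum.summable
      hsum_quad.summable fun m => integral_pow_mul_pow_extremalCountLaw_succ m x (x + y)

end
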